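/- arXiv:1703.07979 — 3 statements merged into one kernel-verified Lean document; each statement's English description precedes it below -/
import Mathlib

section
/- Let n and s be positive integers with n ≥ s, and let ω > 0. Then ∫_0^∞ e^{-x} x^{s-1}/(ω + x)^n dx = ((-1)^{n-s}/(n-1)!) Σ_{k=0}^{∞} ((n+k-1)!/((k+n-s)! k!)) (H_{k+n-s} − γ) ω^k + (-1)^{n+s+1} (s-1)! e^{ω} ln ω Σ_{j=0}^{min(n-1, s-1)} ω^{s-1-j}/(j! (n-1-j)! (s-j-1)!) + (-1)^{s-1} (s-1)! e^{ω} Σ_{m=0}^{n-2} (ω^{s-n+m}/m!) Σ_{l=0}^{n-2-m} (-1)^{l+m}/(l! (s-l-1)! (n-1-l-m)), where H_j = Σ_{i=1}^{j} 1/i is the j-th harmonic number (H_0 = 0), γ is the Euler–Mascheroni constant, terms with a negative factorial argument are zero, empty sums are zero, and the infinite series converges. -/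
open Filter MeasureTheory Set

/-!
Write `K(p, q) = ∫_0^∞ e^{-x} x^p / (ω + x)^q dx`. From `x = (ω + x) - ω` one gets the
Pascal-type rule `K(p + 1, q + 1) = K(p, q) - ω K(p, q + 1)`. The power series, the coefficient
of `e^ω ln ω` and the Laurent polynomial multiplying `e^ω` each obey the same rule, which
reduces the expansion to `p = 0`. There integration by parts lowers `q` down to
`K(0, 1) = e^ω E₁(ω)`. Finally `E₁(ω) = -γ - ln ω + ∫_0^ω (1 - e^{-t}) / t dt`, and `e^ω` times
the last integral is the exponential generating function of the harmonic numbers because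
`H_k = ∫_0^1 (1 + u + ⋯ + u^{k-1}) du`.
-/

section

open Real Topology
open scoped Nat

lemma integral_exp_neg_mul_log :
    ∫ t in Ioi (0 : ℝ), exp (-t) * log t = -eulerMascheroniConstant := by
  have hGamma : HasDerivAt Complex.GammaIntegral (-(eulerMascheroniConstant : ℂ)) 1 := by
    refine Complex.hasDerivAt_Gamma_one.congr_of_eventuallyEq ?_
    filter_upwards [(isOpen_lt continuous_const Complex.continuous_re).mem_nhds
      (show (0 : ℝ) < (1 : ℂ).re by simp)] with z hz
    exact (Complex.Gamma_eq_integral hz).symm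
  have hcast (t : ℝ) : (t : ℂ) ^ ((1 : ℂ) - 1) * (log t * exp (-t))
      = ((exp (-t) * log t : ℝ) : ℂ) := by
    simp [mul_comm]
  have hderiv := (Complex.hasDerivAt_GammaIntegral (s := 1) (by simp)).unique hGamma
  simp only [hcast, integral_complex_ofReal] at hderiv
  exact_mod_cast hderiv

lemma integrableOn_exp_neg_mul_log : IntegrableOn (fun t : ℝ => exp (-t) * log t) (Ioi 0) := by
  -- A function that is not integrable would have integral `0`.
  refine .of_integral_ne_zero ?_
  rw [integral_exp_neg_mul_log]
  linarith [one_half_lt_eulerMascheroniConstant]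

lemma tendsto_exp_neg_mul_log_atTop :
    Tendsto (fun t : ℝ => exp (-t) * log t) atTop (𝓝 0) := by
  refine squeeze_zero' ?_ ?_ (tendsto_pow_mul_exp_neg_atTop_nhds_zero 1)
  · filter_upwards [eventually_ge_atTop 1] with t ht
    exact mul_nonneg (exp_pos _).le (log_nonneg ht)
  · filter_upwards [eventually_gt_atTop 0] with t ht
    rw [pow_one, mul_comm]
    gcongr
    exact log_le_self ht.le

lemma integrableOn_exp_neg_div {x : ℝ} (hx : 0 < x) :
    IntegrableOn (fun t : ℝ => exp (-t) / t) (Ioi x) := by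
  refine ((integrableOn_exp_neg_Ioi x).div_const x).mono'
    (Measurable.aestronglyMeasurable (by fun_prop)) ?_
  filter_upwards [self_mem_ae_restrict measurableSet_Ioi] with t (ht : x < t)
  have htpos : 0 < t := hx.trans ht
  rw [norm_of_nonneg (by positivity)]
  gcongr

lemma integral_Ioi_exp_neg_div {x : ℝ} (hx : 0 < x) :
    ∫ t in Ioi x, exp (-t) / t = -(exp (-x) * log x) + ∫ t in Ioi x, exp (-t) * log t := by
  have hlog := integrableOn_exp_neg_mul_log.mono_set (Ioi_subset_Ioi hx.le)
  have hparts : ∫ t in Ioi x, (exp (-t) / t - exp (-t) * log t) = 0 - exp (-x) * log x := by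
    refine integral_Ioi_of_hasDerivAt_of_tendsto' (fun t (ht : x ≤ t) => ?_)
      ((integrableOn_exp_neg_div hx).sub hlog) tendsto_exp_neg_mul_log_atTop
    have ht₀ : t ≠ 0 := (hx.trans_le ht).ne'
    exact ((hasDerivAt_neg t).exp.mul (hasDerivAt_log ht₀)).congr_deriv (by simp; ring)
  rw [integral_sub (integrableOn_exp_neg_div hx) hlog] at hparts
  linarith

lemma continuous_one_sub_exp_neg_mul_log :
    Continuous fun x : ℝ => (1 - exp (-x)) * log x := by
  refine continuous_iff_continuousAt.2 fun x => ?_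
  rcases eq_or_ne x 0 with rfl | hx
  · have hlinear : (fun x : ℝ => 1 - exp (-x)) =O[𝓝 0] fun x : ℝ => x := by
      simpa using ((hasDerivAt_neg (0 : ℝ)).exp.const_sub 1).isBigO_sub
    have hmul_log : Tendsto (fun x : ℝ => x * log x) (𝓝 0) (𝓝 0) := by
      simpa using continuous_mul_log.tendsto 0
    simpa [ContinuousAt] using
      (hlinear.mul (Asymptotics.isBigO_refl log (𝓝 0))).trans_tendsto hmul_log
  · exact ContinuousAt.mul (by fun_prop) (continuousAt_log hx)

lemma intervalIntegrable_one_sub_exp_neg_div {x : ℝ} (hx : 0 ≤ x) :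
    IntervalIntegrable (fun t : ℝ => (1 - exp (-t)) / t) volume 0 x := by
  refine (intervalIntegrable_const (c := (1 : ℝ))).mono_fun'
    (Measurable.aestronglyMeasurable (by fun_prop)) ?_
  rw [uIoc_of_le hx]
  filter_upwards [self_mem_ae_restrict measurableSet_Ioc] with t ⟨ht, _⟩
  rw [norm_of_nonneg (div_nonneg (by simpa using ht.le) ht.le), div_le_one ht]
  linarith [one_sub_le_exp_neg t]

lemma integral_one_sub_exp_neg_div {x : ℝ} (hx : 0 ≤ x) :
    ∫ t in (0 : ℝ)..x, (1 - exp (-t)) / t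
      = (1 - exp (-x)) * log x - ∫ t in (0 : ℝ)..x, exp (-t) * log t := by
  have hlog : IntervalIntegrable (fun t : ℝ => exp (-t) * log t) volume 0 x := by
    rw [intervalIntegrable_iff_integrableOn_Ioc_of_le hx]
    exact integrableOn_exp_neg_mul_log.mono_set Ioc_subset_Ioi_self
  have hquot := intervalIntegrable_one_sub_exp_neg_div hx
  have hparts := intervalIntegral.integral_eq_sub_of_hasDerivAt_of_le hx
    continuous_one_sub_exp_neg_mul_log.continuousOn
    (f' := fun t => (1 - exp (-t)) / t + exp (-t) * log t) (fun t ht => ?_) (hquot.add hlog)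
  · rw [intervalIntegral.integral_add hquot hlog] at hparts
    simp only [neg_zero, exp_zero, sub_self, zero_mul, sub_zero] at hparts
    linarith
  · exact (((hasDerivAt_neg t).exp.const_sub 1).mul (hasDerivAt_log ht.1.ne')).congr_deriv
      (by simp; ring)

lemma integral_Ioi_exp_neg_div_eq_neg_log {x : ℝ} (hx : 0 < x) :
    ∫ t in Ioi x, exp (-t) / t
      = -eulerMascheroniConstant - log x + ∫ t in (0 : ℝ)..x, (1 - exp (-t)) / t := by
  have hsplit := intervalIntegral.integral_interval_add_Ioi integrableOn_exp_neg_mul_log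
    (integrableOn_exp_neg_mul_log.mono_set (Ioi_subset_Ioi hx.le))
  rw [integral_exp_neg_mul_log] at hsplit
  rw [integral_Ioi_exp_neg_div hx, integral_one_sub_exp_neg_div hx.le]
  linarith

lemma integral_sum_pow_eq_harmonic (k : ℕ) :
    ∫ u in (0 : ℝ)..1, ∑ i ∈ Finset.range k, u ^ i = harmonic k := by
  rw [intervalIntegral.integral_finsetSum fun i _ => intervalIntegral.intervalIntegrable_pow i]
  simp [harmonic]

lemma hasSum_pow_div_factorial (x : ℝ) : HasSum (fun k : ℕ => x ^ k / k !) (exp x) := by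
  rw [exp_eq_exp_ℝ]
  exact NormedSpace.expSeries_div_hasSum_exp x

lemma hasSum_geom_sum_mul_pow_div_factorial {u : ℝ} (hu : u ≠ 1) (x : ℝ) :
    HasSum (fun k : ℕ => (∑ i ∈ Finset.range k, u ^ i) * (x ^ k / k !))
      ((exp x - exp (u * x)) / (1 - u)) := by
  have hu' : 1 - u ≠ 0 := sub_ne_zero.2 hu.symm
  refine (((hasSum_pow_div_factorial x).sub
    (hasSum_pow_div_factorial (u * x))).div_const (1 - u)).congr_fun fun k => ?_
  rw [eq_div_of_mul_eq hu' (geom_sum_mul_neg u k), mul_pow]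
  ring

lemma abs_geom_sum_le_two_pow {u : ℝ} (hu : |u| ≤ 1) (k : ℕ) :
    |∑ i ∈ Finset.range k, u ^ i| ≤ 2 ^ k := by
  have hterm (i : ℕ) : |u ^ i| ≤ 1 := by
    rw [abs_pow]
    exact pow_le_one₀ (abs_nonneg u) hu
  calc |∑ i ∈ Finset.range k, u ^ i| ≤ ∑ i ∈ Finset.range k, |u ^ i| :=
        Finset.abs_sum_le_sum_abs _ _
    _ ≤ ∑ _i ∈ Finset.range k, (1 : ℝ) := Finset.sum_le_sum fun i _ => hterm i
    _ = k := by simp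
    _ ≤ 2 ^ k := by exact_mod_cast k.lt_two_pow_self.le

lemma exp_mul_integral_one_sub_exp_neg_div (x : ℝ) :
    exp x * ∫ t in (0 : ℝ)..x, (1 - exp (-t)) / t
      = ∫ u in (0 : ℝ)..1, (exp x - exp (u * x)) / (1 - u) := by
  rcases eq_or_ne x 0 with rfl | hx
  · simp
  have hscale := intervalIntegral.mul_integral_comp_sub_mul
    (a := 0) (b := 1) (f := fun t : ℝ => (1 - exp (-t)) / t) x x
  rw [mul_one, sub_self, mul_zero, sub_zero] at hscale
  rw [← hscale, ← mul_assoc, ← intervalIntegral.integral_const_mul]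
  refine intervalIntegral.integral_congr fun u _ => ?_
  have hexp : exp (u * x) = exp x * exp (-(x - x * u)) := by
    rw [← exp_add]
    ring_nf
  rw [hexp, show x - x * u = x * (1 - u) by ring]
  field_simp

theorem hasSum_harmonic_mul_pow_div_factorial (x : ℝ) :
    HasSum (fun k : ℕ => (harmonic k : ℝ) * (x ^ k / k !))
      (exp x * ∫ t in (0 : ℝ)..x, (1 - exp (-t)) / t) := by
  rw [exp_mul_integral_one_sub_exp_neg_div]
  simp only [← integral_sum_pow_eq_harmonic, ← intervalIntegral.integral_mul_const]
  refine intervalIntegral.hasSum_integral_of_dominated_convergence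
    (fun k _ => (2 * |x|) ^ k / k !) (fun k => by fun_prop)
    (fun k => .of_forall fun u hu => ?_)
    (.of_forall fun _ _ => summable_pow_div_factorial _) intervalIntegrable_const ?_
  · rw [uIoc_of_le zero_le_one] at hu
    rw [norm_mul, norm_div, norm_pow, norm_natCast, mul_pow, mul_div_assoc]
    simp only [norm_eq_abs]
    gcongr
    exact abs_geom_sum_le_two_pow (abs_le.2 ⟨by linarith [hu.1], hu.2⟩) k
  · filter_upwards [Measure.ae_ne volume 1] with u hu _
    exact hasSum_geom_sum_mul_pow_div_factorial hu x

/-- The integral `∫_0^∞ e^{-x} x^p / (ω + x)^q dx`, which is `p! ω^{p + 1 - q}` times the Kummer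
function `U(p + 1, p + 2 - q, ω)`. -/
noncomputable def kummerIntegral (p q : ℕ) (ω : ℝ) : ℝ :=
  ∫ x in Ioi (0 : ℝ), exp (-x) * x ^ p / (ω + x) ^ q

lemma integrableOn_exp_neg_mul_pow_div_add_pow (p q : ℕ) {ω : ℝ} (hω : 0 < ω) :
    IntegrableOn (fun x : ℝ => exp (-x) * x ^ p / (ω + x) ^ q) (Ioi 0) := by
  have hΓ : IntegrableOn (fun x : ℝ => exp (-x) * x ^ p) (Ioi 0) := by
    simpa using GammaIntegral_convergent (s := (p : ℝ) + 1) (by positivity)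
  refine (hΓ.div_const (ω ^ q)).mono' (Measurable.aestronglyMeasurable (by fun_prop)) ?_
  filter_upwards [self_mem_ae_restrict measurableSet_Ioi] with x (hx : 0 < x)
  rw [norm_of_nonneg (by positivity)]
  gcongr
  linarith

lemma kummerIntegral_succ_succ (p q : ℕ) {ω : ℝ} (hω : 0 < ω) :
    kummerIntegral (p + 1) (q + 1) ω
      = kummerIntegral p q ω - ω * kummerIntegral p (q + 1) ω := by
  rw [kummerIntegral, kummerIntegral, kummerIntegral, ← integral_const_mul,
    ← integral_sub (integrableOn_exp_neg_mul_pow_div_add_pow p q hω)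
      ((integrableOn_exp_neg_mul_pow_div_add_pow p (q + 1) hω).const_mul ω)]
  refine setIntegral_congr_fun measurableSet_Ioi fun x (hx : 0 < x) => ?_
  field_simp
  ring

lemma tendsto_exp_neg_div_add_pow (q : ℕ) {ω : ℝ} (hω : 0 < ω) :
    Tendsto (fun x : ℝ => exp (-x) / (ω + x) ^ q) atTop (𝓝 0) := by
  have hbound : Tendsto (fun x : ℝ => exp (-x) / ω ^ q) atTop (𝓝 0) := by
    simpa using tendsto_exp_neg_atTop_nhds_zero.div_const (ω ^ q)
  refine squeeze_zero' ?_ ?_ hbound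
  · filter_upwards [eventually_ge_atTop 0] with x hx
    positivity
  · filter_upwards [eventually_ge_atTop 0] with x hx
    gcongr
    linarith

lemma mul_kummerIntegral_zero_succ (q : ℕ) {ω : ℝ} (hω : 0 < ω) :
    q * kummerIntegral 0 (q + 1) ω = (ω ^ q)⁻¹ - kummerIntegral 0 q ω := by
  have hq := integrableOn_exp_neg_mul_pow_div_add_pow 0 q hω
  have hq' := (integrableOn_exp_neg_mul_pow_div_add_pow 0 (q + 1) hω).const_mul (q : ℝ)
  have hparts : ∫ x in Ioi (0 : ℝ), (exp (-x) * x ^ 0 / (ω + x) ^ q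
      + q * (exp (-x) * x ^ 0 / (ω + x) ^ (q + 1))) = -0 - -(exp (-0) / (ω + 0) ^ q) := by
    refine integral_Ioi_of_hasDerivAt_of_tendsto' (fun x (hx : 0 ≤ x) => ?_) (hq.add hq')
      (tendsto_exp_neg_div_add_pow q hω).neg
    have hne : ω + x ≠ 0 := by positivity
    refine (((hasDerivAt_neg x).exp.div (((hasDerivAt_id x).const_add ω).pow q)
      (pow_ne_zero q hne)).neg).congr_deriv ?_
    rcases q with _ | q
    · simp
    · simp only [Pi.pow_apply, id_eq, add_tsub_cancel_right, pow_zero, Pi.add_apply]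
      field_simp
      ring
  rw [integral_add hq hq', integral_const_mul] at hparts
  simp only [neg_zero, exp_zero, add_zero, zero_sub, neg_neg, one_div] at hparts
  rw [kummerIntegral, kummerIntegral, ← hparts]
  ring

lemma kummerIntegral_zero_one (ω : ℝ) :
    kummerIntegral 0 1 ω = exp ω * ∫ t in Ioi ω, exp (-t) / t := by
  have hpreimage : (fun x : ℝ => x + ω) ⁻¹' Ioi ω = Ioi 0 := by simp
  rw [kummerIntegral, ← (measurePreserving_add_right volume ω).setIntegral_preimage_emb
    (measurableEmbedding_addRight ω) _ (Ioi ω), hpreimage, ← integral_const_mul]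
  refine setIntegral_congr_fun measurableSet_Ioi fun x _ => ?_
  have hexp : exp (-x) = exp ω * exp (-(x + ω)) := by
    rw [← exp_add]
    ring_nf
  simp only [pow_zero, mul_one, pow_one]
  rw [hexp, mul_div_assoc, add_comm ω x]

/-- The coefficient of `ω^k` in the power series part of `kummerIntegral p (p + d + 1) ω`. -/
noncomputable def seriesCoeff (p d k : ℕ) : ℝ :=
  (-1) ^ d / (p + d)! * ((p + d + k)! / ((k + d)! * k !) *
    ((harmonic (k + d) : ℝ) - eulerMascheroniConstant))

lemma seriesCoeff_succ_zero (p d : ℕ) : seriesCoeff (p + 1) d 0 = seriesCoeff p d 0 := by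
  simp only [seriesCoeff, add_zero]
  field_simp

lemma seriesCoeff_succ_succ (p d k : ℕ) :
    seriesCoeff (p + 1) d (k + 1) = seriesCoeff p d (k + 1) - seriesCoeff p (d + 1) k := by
  simp only [seriesCoeff]
  rw [show p + 1 + d + (k + 1) = p + d + k + 1 + 1 by ring,
    show p + d + (k + 1) = p + d + k + 1 by ring, show p + (d + 1) + k = p + d + k + 1 by ring,
    show p + 1 + d = p + d + 1 by ring, show p + (d + 1) = p + d + 1 by ring,
    show k + (d + 1) = k + 1 + d by ring, Nat.factorial_succ (p + d + k + 1),
    Nat.factorial_succ (p + d), Nat.factorial_succ k]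
  push_cast
  field_simp
  ring

lemma seriesCoeff_zero_succ (d k : ℕ) :
    (d + 1) * seriesCoeff 0 (d + 1) k
      = -seriesCoeff 0 d k - (-1) ^ d / d ! * (1 / (k ! * ((k : ℝ) + d + 1))) := by
  simp only [seriesCoeff, zero_add]
  rw [show d + 1 + k = k + d + 1 by ring, show k + (d + 1) = k + d + 1 by ring, add_comm d k,
    harmonic_succ, Nat.factorial_succ (k + d), Nat.factorial_succ d]
  push_cast
  field_simp
  ring

/-- The coefficient of `e^ω ln ω` in `kummerIntegral p (p + d + 1) ω`. Up to a constant factor it is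
the associated Laguerre polynomial `L_p^{(d)}(-ω)`. -/
noncomputable def logCoeff (p d : ℕ) (ω : ℝ) : ℝ :=
  (-1) ^ (d + 1) * ∑ i ∈ Finset.range (p + 1), (p.choose i : ℝ) * (ω ^ i / (d + i)!)

lemma logCoeff_zero (d : ℕ) (ω : ℝ) : logCoeff 0 d ω = (-1) ^ (d + 1) / d ! := by
  simp [logCoeff, div_eq_mul_inv]

lemma mul_logCoeff_zero_succ (d : ℕ) (ω : ℝ) :
    (d + 1) * logCoeff 0 (d + 1) ω = -logCoeff 0 d ω := by
  rw [logCoeff_zero, logCoeff_zero, Nat.factorial_succ]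
  push_cast
  field_simp
  ring

lemma logCoeff_succ (p d : ℕ) (ω : ℝ) :
    logCoeff (p + 1) d ω = logCoeff p d ω - ω * logCoeff p (d + 1) ω := by
  have hshift : ∑ i ∈ Finset.range (p + 1), (p.choose i : ℝ) * (ω ^ (i + 1) / (d + (i + 1))!)
      = ω * ∑ i ∈ Finset.range (p + 1), (p.choose i : ℝ) * (ω ^ i / (d + 1 + i)!) := by
    rw [Finset.mul_sum]
    refine Finset.sum_congr rfl fun i _ => ?_
    rw [show d + (i + 1) = d + 1 + i by ring]
    ring
  rw [logCoeff, Finset.sum_choose_succ_mul (fun i _ => ω ^ i / ((d + i)! : ℝ)) p, hshift,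
    logCoeff, logCoeff]
  ring

lemma logCoeff_eq_sum_factorial (p d : ℕ) (ω : ℝ) :
    logCoeff p d ω = (-1) ^ (d + 1) * p ! *
      ∑ j ∈ Finset.range (p + 1), ω ^ (p - j) / (j ! * (p + d - j)! * (p - j)!) := by
  rw [logCoeff, ← Finset.sum_flip (fun i => (p.choose i : ℝ) * (ω ^ i / (d + i)!)), mul_assoc,
    Finset.mul_sum (a := (p ! : ℝ))]
  congr 1
  refine Finset.sum_congr rfl fun j hj => ?_
  have hjp : j ≤ p := Finset.mem_range_succ_iff.1 hj
  rw [Nat.choose_symm hjp, Nat.cast_choose ℝ hjp, ← Nat.add_sub_assoc hjp, add_comm d p]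
  field_simp

/-- The coefficient of `z^q` in the power series `-(1 - z)^p log (1 - z)`. -/
noncomputable def oneSubPowLogCoeff (p q : ℕ) : ℝ :=
  ∑ l ∈ Finset.range q, (-1) ^ l * (p.choose l : ℝ) / ((q - l : ℕ) : ℝ)

lemma oneSubPowLogCoeff_zero_left (q : ℕ) : oneSubPowLogCoeff 0 q = (q : ℝ)⁻¹ := by
  rcases q with _ | q
  · simp [oneSubPowLogCoeff]
  · simp [oneSubPowLogCoeff, Finset.sum_range_succ']

lemma oneSubPowLogCoeff_zero_right (p : ℕ) : oneSubPowLogCoeff p 0 = 0 := by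
  simp [oneSubPowLogCoeff]

lemma oneSubPowLogCoeff_succ_succ (p q : ℕ) :
    oneSubPowLogCoeff (p + 1) (q + 1)
      = oneSubPowLogCoeff p (q + 1) - oneSubPowLogCoeff p q := by
  simp only [oneSubPowLogCoeff, Finset.sum_range_succ' _ q, Nat.choose_succ_succ,
    Nat.choose_zero_right, Nat.add_sub_add_right]
  rw [add_sub_right_comm, ← Finset.sum_sub_distrib]
  congr 1
  refine Finset.sum_congr rfl fun l _ => ?_
  push_cast
  ring

lemma factorial_div_factorial_mul_Gamma (p l : ℕ) :
    (p ! : ℝ) / (l ! * Gamma ((p : ℝ) + 1 - l)) = p.choose l := by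
  rcases le_or_gt l p with h | h
  · obtain ⟨r, rfl⟩ := Nat.exists_eq_add_of_le h
    rw [show ((l + r : ℕ) : ℝ) + 1 - l = r + 1 by push_cast; ring,
      Gamma_nat_eq_factorial, Nat.cast_choose ℝ h, Nat.add_sub_cancel_left]
  · obtain ⟨r, rfl⟩ := Nat.exists_eq_add_of_lt h
    rw [show (p : ℝ) + 1 - (p + r + 1 : ℕ) = -r by push_cast; ring,
      Gamma_neg_nat_eq_zero, Nat.choose_eq_zero_of_lt h]
    simp

lemma oneSubPowLogCoeff_eq_sum_Gamma (p q : ℕ) :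
    oneSubPowLogCoeff p q = p ! *
      ∑ l ∈ Finset.range q, (-1) ^ l / (l ! * Gamma ((p : ℝ) + 1 - l) * ((q - l : ℕ) : ℝ)) := by
  rw [oneSubPowLogCoeff, Finset.mul_sum]
  refine Finset.sum_congr rfl fun l _ => ?_
  rw [← factorial_div_factorial_mul_Gamma]
  simp only [div_eq_mul_inv, mul_inv]
  ring

/-- The Laurent polynomial in `ω` that multiplies `e^ω` in `kummerIntegral p (p + d + 1) ω`. -/
noncomputable def laurentPart (p d : ℕ) (ω : ℝ) : ℝ :=
  (-1) ^ p *
    (∑ m ∈ Finset.range (p + d), (-ω) ^ m / m ! * oneSubPowLogCoeff p (p + d - m)) / ω ^ d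

lemma laurentPart_succ (p d : ℕ) {ω : ℝ} (hω : ω ≠ 0) :
    laurentPart (p + 1) d ω = laurentPart p d ω - ω * laurentPart p (d + 1) ω := by
  have hextend : ∑ m ∈ Finset.range (p + d), (-ω) ^ m / m ! * oneSubPowLogCoeff p (p + d - m)
      = ∑ m ∈ Finset.range (p + d + 1),
        (-ω) ^ m / m ! * oneSubPowLogCoeff p (p + d - m) := by
    simp [Finset.sum_range_succ, oneSubPowLogCoeff_zero_right]
  have hpascal : ∑ m ∈ Finset.range (p + d + 1),
        (-ω) ^ m / m ! * oneSubPowLogCoeff (p + 1) (p + d + 1 - m)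
      = ∑ m ∈ Finset.range (p + d + 1), (-ω) ^ m / m ! * oneSubPowLogCoeff p (p + d + 1 - m)
        - ∑ m ∈ Finset.range (p + d + 1), (-ω) ^ m / m ! * oneSubPowLogCoeff p (p + d - m) := by
    rw [← Finset.sum_sub_distrib]
    refine Finset.sum_congr rfl fun m hm => ?_
    rw [Nat.sub_add_comm (Finset.mem_range_succ_iff.1 hm), oneSubPowLogCoeff_succ_succ, mul_sub]
  rw [laurentPart, laurentPart, laurentPart, hextend, show p + 1 + d = p + d + 1 by ring,
    show p + (d + 1) = p + d + 1 by ring, hpascal]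
  field_simp
  ring

-- The factor `d + 1` is split as `m + (d + 1 - m)` in the `m`-th term.
lemma succ_mul_sum_pow_div_factorial_mul_inv (d : ℕ) (x : ℝ) :
    (d + 1) * ∑ m ∈ Finset.range (d + 1), x ^ m / m ! * ((d + 1 - m : ℕ) : ℝ)⁻¹
      = x * ∑ m ∈ Finset.range d, x ^ m / m ! * ((d - m : ℕ) : ℝ)⁻¹
        + ∑ m ∈ Finset.range (d + 1), x ^ m / m ! := by
  have hterm : ∀ m ∈ Finset.range (d + 1),
      ((d : ℝ) + 1) * (x ^ m / m ! * ((d + 1 - m : ℕ) : ℝ)⁻¹)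
        = m * (x ^ m / m !) * ((d + 1 - m : ℕ) : ℝ)⁻¹ + x ^ m / m ! := by
    intro m hm
    have hmd : m < d + 1 := Finset.mem_range.1 hm
    have hne : (d : ℝ) + 1 - m ≠ 0 := sub_ne_zero.2 (by exact_mod_cast hmd.ne')
    rw [Nat.cast_sub hmd.le]
    push_cast
    field_simp
    ring
  rw [Finset.mul_sum, Finset.sum_congr rfl hterm, Finset.sum_add_distrib,
    Finset.sum_range_succ', Nat.cast_zero, zero_mul, zero_mul, add_zero, Finset.mul_sum]
  congr 1
  refine Finset.sum_congr rfl fun m _ => ?_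
  rw [Nat.factorial_succ, Nat.add_sub_add_right, pow_succ']
  push_cast
  field_simp

lemma mul_laurentPart_zero_succ (d : ℕ) {ω : ℝ} (hω : ω ≠ 0) :
    (d + 1) * laurentPart 0 (d + 1) ω
      = -laurentPart 0 d ω + (∑ m ∈ Finset.range (d + 1), (-ω) ^ m / m !) / ω ^ (d + 1) := by
  simp only [laurentPart, oneSubPowLogCoeff_zero_left, pow_zero, one_mul, zero_add]
  rw [← mul_div_assoc, succ_mul_sum_pow_div_factorial_mul_inv]
  field_simp
  ring

lemma laurentPart_eq_sum_Gamma (p d : ℕ) {ω : ℝ} (hω : ω ≠ 0) :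
    laurentPart p d ω = (-1) ^ p * p ! *
      ∑ m ∈ Finset.range (p + d), ω ^ ((m : ℤ) - d) / m ! *
        ∑ l ∈ Finset.range (p + d - m), (-1) ^ (l + m) /
          (l ! * Gamma ((p : ℝ) + 1 - l) * ((p + d - l - m : ℕ) : ℝ)) := by
  rw [laurentPart, mul_div_assoc, mul_assoc, Finset.sum_div, Finset.mul_sum (a := (p ! : ℝ))]
  congr 1
  refine Finset.sum_congr rfl fun m _ => ?_
  have hsign : ∑ l ∈ Finset.range (p + d - m), (-1) ^ (l + m) /
        (l ! * Gamma ((p : ℝ) + 1 - l) * ((p + d - l - m : ℕ) : ℝ))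
      = (-1) ^ m * ∑ l ∈ Finset.range (p + d - m), (-1) ^ l /
        (l ! * Gamma ((p : ℝ) + 1 - l) * ((p + d - m - l : ℕ) : ℝ)) := by
    rw [Finset.mul_sum]
    refine Finset.sum_congr rfl fun l _ => ?_
    rw [pow_add, Nat.sub_right_comm]
    ring
  rw [hsign, oneSubPowLogCoeff_eq_sum_Gamma, zpow_sub₀ hω, zpow_natCast, zpow_natCast, neg_pow]
  ring

lemma neg_one_pow_sq {R : Type*} [Monoid R] [HasDistribNeg R] (n : ℕ) : ((-1 : R) ^ n) ^ 2 = 1 := by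
  rw [← pow_mul, pow_mul', neg_one_sq, one_pow]

lemma hasSum_pow_div_factorial_mul_add (d : ℕ) (x : ℝ) :
    HasSum (fun k : ℕ => x ^ (k + d + 1) / (k ! * ((k : ℝ) + d + 1)))
      ((-1) ^ d * d ! * (exp x * (∑ m ∈ Finset.range (d + 1), (-x) ^ m / m !) - 1)) := by
  induction d with
  | zero =>
    have htail := (hasSum_nat_add_iff' 1).2 (hasSum_pow_div_factorial x)
    convert! htail using 1
    · funext k
      rw [Nat.factorial_succ]
      push_cast
      ring
    · simp
  | succ d ih =>
    have hparts := ((hasSum_pow_div_factorial x).mul_left (x ^ (d + 1))).sub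
      (ih.mul_left ((d : ℝ) + 1))
    convert! (hasSum_nat_add_iff' 1).2 hparts using 1
    · funext k
      rw [Nat.factorial_succ]
      push_cast
      field_simp
      ring
    · rw [Finset.sum_range_succ _ (d + 1), neg_pow x (d + 1), Nat.factorial_succ]
      simp only [Finset.range_one, Finset.sum_singleton, pow_zero, Nat.factorial_zero,
        Nat.cast_one, Nat.cast_zero, zero_add, div_one, mul_one, one_mul, pow_succ (-1 : ℝ) d]
      push_cast
      field_simp
      linear_combination x ^ (d + 1) * exp x * neg_one_pow_sq (R := ℝ) d

lemma hasSum_div_factorial_mul_add_mul_pow (d : ℕ) {ω : ℝ} (hω : ω ≠ 0) :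
    HasSum (fun k : ℕ => (-1) ^ d / d ! * (1 / (k ! * ((k : ℝ) + d + 1))) * ω ^ k)
      (exp ω * ((∑ m ∈ Finset.range (d + 1), (-ω) ^ m / m !) / ω ^ (d + 1))
        - (ω ^ (d + 1))⁻¹) := by
  convert! (hasSum_pow_div_factorial_mul_add d ω).mul_left ((-1) ^ d / (d ! * ω ^ (d + 1))) using 1
  · funext k
    rw [add_assoc k d 1, pow_add ω k (d + 1)]
    field_simp
  · field_simp
    rw [neg_one_pow_sq, mul_one]

lemma hasSum_seriesCoeff_zero_zero_mul_pow {ω : ℝ} (hω : 0 < ω) :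
    HasSum (fun k => seriesCoeff 0 0 k * ω ^ k)
      (kummerIntegral 0 1 ω - exp ω * (log ω * logCoeff 0 0 ω + laurentPart 0 0 ω)) := by
  convert! (hasSum_harmonic_mul_pow_div_factorial ω).sub
    ((hasSum_pow_div_factorial ω).mul_left eulerMascheroniConstant) using 1
  · funext k
    simp only [seriesCoeff, add_zero, zero_add, pow_zero, Nat.factorial_zero, Nat.cast_one]
    field_simp
  · have hlaurent : laurentPart 0 0 ω = 0 := by simp [laurentPart]
    rw [kummerIntegral_zero_one, integral_Ioi_exp_neg_div_eq_neg_log hω, logCoeff_zero, hlaurent,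
      zero_add, pow_one, Nat.factorial_zero, Nat.cast_one, div_one]
    ring

lemma hasSum_seriesCoeff_zero_mul_pow (d : ℕ) {ω : ℝ} (hω : 0 < ω) :
    HasSum (fun k => seriesCoeff 0 d k * ω ^ k)
      (kummerIntegral 0 (d + 1) ω
        - exp ω * (log ω * logCoeff 0 d ω + laurentPart 0 d ω)) := by
  induction d with
  | zero => exact hasSum_seriesCoeff_zero_zero_mul_pow hω
  | succ d ih =>
    have hd : (d : ℝ) + 1 ≠ 0 := by positivity
    have hK := mul_kummerIntegral_zero_succ (d + 1) hω
    push_cast at hK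
    refine (hasSum_mul_left_iff hd).1 ?_
    convert! ih.neg.sub (hasSum_div_factorial_mul_add_mul_pow d hω.ne') using 1
    · funext k
      rw [← mul_assoc, seriesCoeff_zero_succ]
      ring
    · linear_combination hK - exp ω * log ω * mul_logCoeff_zero_succ d ω
        - exp ω * mul_laurentPart_zero_succ d hω.ne'

theorem hasSum_seriesCoeff_mul_pow (p d : ℕ) {ω : ℝ} (hω : 0 < ω) :
    HasSum (fun k => seriesCoeff p d k * ω ^ k)
      (kummerIntegral p (p + d + 1) ω
        - exp ω * (log ω * logCoeff p d ω + laurentPart p d ω)) := by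
  induction p generalizing d with
  | zero => simpa only [zero_add] using hasSum_seriesCoeff_zero_mul_pow d hω
  | succ p ih =>
    rw [← hasSum_nat_add_iff' 1]
    convert! ((hasSum_nat_add_iff' 1).2 (ih d)).sub ((ih (d + 1)).mul_left ω) using 1
    · funext k
      rw [seriesCoeff_succ_succ]
      ring
    · rw [show p + 1 + d + 1 = p + d + 1 + 1 by ring, ← add_assoc p d 1,
        kummerIntegral_succ_succ p (p + d + 1) hω, logCoeff_succ, laurentPart_succ p d hω.ne']
      simp only [Finset.sum_range_one, seriesCoeff_succ_zero]
      ring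

theorem hasSum_factorial_mul_harmonic_sub_mul_pow (p d : ℕ) {ω : ℝ} (hω : 0 < ω) :
    HasSum (fun k : ℕ => (p + d + k)! / ((k + d)! * k !) *
        ((harmonic (k + d) : ℝ) - eulerMascheroniConstant) * ω ^ k)
      ((-1) ^ d * (p + d)! * (kummerIntegral p (p + d + 1) ω
        - exp ω * (log ω * logCoeff p d ω + laurentPart p d ω))) := by
  refine ((hasSum_seriesCoeff_mul_pow p d hω).mul_left ((-1) ^ d * ((p + d)! : ℝ))).congr_fun
    fun k => ?_
  rw [seriesCoeff]
  field_simp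
  rw [neg_one_pow_sq, mul_one]

end

/-- Series representation of `∫_0^∞ e^{-x} x^{s-1}/(ω+x)^n dx` (up to a factor, the
Kummer function `U(s, s+1−n, ω)`) for positive integers `n ≥ s` and `ω > 0`.
The digamma values are written via harmonic numbers, `ψ(j+1) = H_j − γ`; the factorial
`(s-l-1)!`, whose argument may be negative, is written as `Γ(s-l)` (which vanishes at
nonpositive integers, making those terms zero); `ω^{s-n+m}` is an integer power. -/
theorem stmt_17 (n s : ℕ) (hs : 1 ≤ s) (hns : s ≤ n) (ω : ℝ) (hω : 0 < ω) :
    ∃ A : ℝ,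
      HasSum (fun k : ℕ =>
        ((Nat.factorial (n + k - 1) : ℝ) /
            ((Nat.factorial (k + n - s) : ℝ) * (Nat.factorial k : ℝ))) *
          ((harmonic (k + n - s) : ℝ) - Real.eulerMascheroniConstant) * ω ^ k) A ∧
      (∫ x in Set.Ioi (0 : ℝ), Real.exp (-x) * x ^ (s - 1) / (ω + x) ^ n) =
        ((-1 : ℝ) ^ (n - s) / (Nat.factorial (n - 1) : ℝ)) * A +
        (-1 : ℝ) ^ (n + s + 1) * (Nat.factorial (s - 1) : ℝ) * Real.exp ω * Real.log ω *
          (∑ j ∈ Finset.range (min (n - 1) (s - 1) + 1),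
            ω ^ (s - 1 - j) /
              ((Nat.factorial j : ℝ) * (Nat.factorial (n - 1 - j) : ℝ) *
                (Nat.factorial (s - j - 1) : ℝ))) +
        (-1 : ℝ) ^ (s - 1) * (Nat.factorial (s - 1) : ℝ) * Real.exp ω *
          ∑ m ∈ Finset.range (n - 1),
            (ω ^ ((s : ℤ) - (n : ℤ) + (m : ℤ)) / (Nat.factorial m : ℝ)) *
              ∑ l ∈ Finset.range (n - 1 - m),
                (-1 : ℝ) ^ (l + m) /
                  ((Nat.factorial l : ℝ) * Real.Gamma ((s : ℝ) - l) *
                    ((n - 1 - l - m : ℕ) : ℝ)) := by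
  obtain ⟨p, rfl⟩ := Nat.exists_eq_add_of_le' hs
  obtain ⟨d, rfl⟩ := Nat.exists_eq_add_of_le hns
  have hn : p + 1 + d - 1 = p + d := by omega
  have hnk (k : ℕ) : p + 1 + d + k - 1 = p + d + k := by omega
  have hkd (k : ℕ) : k + (p + 1 + d) - (p + 1) = k + d := by omega
  have hpj (j : ℕ) : p + 1 - j - 1 = p - j := by omega
  have hmd (m : ℕ) : (p : ℤ) + 1 - (p + 1 + d : ℕ) + m = m - d := by push_cast; ring
  have hsign : (-1 : ℝ) ^ (p + 1 + d + (p + 1) + 1) = (-1) ^ (d + 1) := by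
    rw [show p + 1 + d + (p + 1) + 1 = 2 * (p + 1) + (d + 1) by ring, pow_add, pow_mul,
      neg_one_sq, one_pow, one_mul]
  simp only [hn, hnk, hkd, hpj, hmd, hsign, Nat.add_sub_cancel, Nat.add_sub_cancel_left,
    Nat.cast_succ, min_eq_right (Nat.le_add_right p d)]
  refine ⟨_, hasSum_factorial_mul_harmonic_sub_mul_pow p d hω, ?_⟩
  rw [← kummerIntegral, Nat.add_right_comm p 1 d, logCoeff_eq_sum_factorial,
    laurentPart_eq_sum_Gamma p d hω.ne']
  field_simp
  rw [neg_one_pow_sq]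
  ring
end

section
/- Let n and s be positive integers, 0 < μ < 1 and ζ > 1. Then ∫_0^1 x^{-μ} (1-x)^s/(ζ^{-1} + x)^n dx = Σ_{k=0}^{∞} binom(-n, k) ζ^{-k} Σ_{l=0}^{s} (-1)^l s!/(l! (s-l)! (l-n-k-μ+1)) + (-1)^{n-1} (π s!/sin(πμ)) Σ_{k=0}^{n-1} (-1)^k (μ)_k (1 + ζ^{-1})^{s-n+k+1} ζ^{k+μ}/(k! (s-n+k+1)! (n-k-1)!), where (μ)_k = μ(μ+1)⋯(μ+k-1) is the Pochhammer symbol ((μ)_0 = 1), any term with a negative factorial argument is set to zero, and the infinite series converges. -/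
open Filter MeasureTheory Set

/-!
Write `a = ζ⁻¹`. For `u < ν`, the integral of `x ^ (u - 1) * (a + x) ^ (-ν)` over `(0, 1)` is the
integral over `(0, ∞)`, a beta value, minus the integral over `(1, ∞)`, where the binomial series
in `a / x` can be integrated termwise. Integration by parts expresses the integral for `ν` through
the one for `ν + 1`, and the series and the beta value obey the same recurrence, so the identity
descends to every `ν` with `u - ν ∉ ℕ`. Expanding `(1 - x) ^ s` then gives the statement: by the
reflection formula the beta values are, up to sign, `π / sin (π μ)` times the binomial coefficients
of `l - μ` over `n - 1`, and the Chu–Vandermonde identity sums these over `l`.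
-/

open ProbabilityTheory (beta)

section BinomialRing

variable {R : Type*} [Ring R] [BinomialRing R]

theorem succ_mul_ring_choose_succ_eq_choose_mul_sub (r : R) (k : ℕ) :
    (k + 1 : ℕ) * Ring.choose r (k + 1) = Ring.choose r k * (r - k) := by
  simpa using Ring.choose_smul_choose r k.le_succ

theorem succ_mul_ring_choose_succ_eq_mul_choose_sub_one (r : R) (k : ℕ) :
    (k + 1 : ℕ) * Ring.choose r (k + 1) = r * Ring.choose (r - 1) k := by
  simpa using Ring.choose_smul_choose r (Nat.le_add_left 1 k)

theorem ring_choose_neg_natCast (n k : ℕ) :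
    Ring.choose (-n : R) k = (-1) ^ k * (n + k - 1).choose k := by
  obtain _ | n := n
  · cases k <;> simp
  · have h : ((n + 1 : ℕ) : R) + k - 1 = (n + k : ℕ) := by push_cast; abel
    rw [Ring.choose_neg, h, Ring.choose_natCast, Nat.add_right_comm, Nat.add_sub_cancel]
    simp [Int.negOnePow_def, Units.smul_def]

theorem ring_choose_add_natCast (r : R) (l m : ℕ) :
    Ring.choose (r + l) m = ∑ k ∈ Finset.range (m + 1), Ring.choose r k * l.choose (m - k) := by
  simp [Ring.add_choose_eq m (Nat.commute_cast r l), Ring.choose_natCast,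
    Finset.Nat.sum_antidiagonal_eq_sum_range_succ_mk]

end BinomialRing

theorem ring_choose_neg_eq_prod_div_factorial {K : Type*} [Field K] [CharZero K] (x : K) (k : ℕ) :
    Ring.choose (-x) k = (-1) ^ k * (∏ i ∈ Finset.range k, (x + i)) / k.factorial := by
  induction k with
  | zero => simp
  | succ k ih =>
    have hk : (k + 1 : K) ≠ 0 := k.cast_add_one_ne_zero
    have hf : (k.factorial : K) ≠ 0 := Nat.cast_ne_zero.2 k.factorial_ne_zero
    have h := succ_mul_ring_choose_succ_eq_choose_mul_sub (-x) k
    rw [ih] at h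
    rw [Finset.prod_range_succ, Nat.factorial_succ, pow_succ]
    push_cast at h ⊢
    rw [← mul_right_inj' hk, h]
    field_simp
    ring

theorem natCast_choose_eq_factorial_div_Gamma (s j : ℕ) :
    (s.choose j : ℝ) = s.factorial / (j.factorial * Real.Gamma (s - j + 1)) := by
  rcases le_or_gt j s with hjs | hsj
  · rw [← Nat.cast_sub hjs, Real.Gamma_nat_eq_factorial, Nat.cast_choose ℝ hjs]
  · obtain ⟨t, rfl⟩ := Nat.exists_eq_add_of_lt hsj
    have hΓ : (s : ℝ) - (s + t + 1 : ℕ) + 1 = -(t : ℝ) := by push_cast; ring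
    rw [hΓ, Real.Gamma_neg_nat_eq_zero, Nat.choose_eq_zero_of_lt hsj]
    simp

theorem sum_choose_mul_choose_mul_pow {R : Type*} [CommSemiring R] (x : R) (s j : ℕ) :
    ∑ l ∈ Finset.range (s + 1), (s.choose l : R) * l.choose j * x ^ l =
      s.choose j * x ^ j * (1 + x) ^ (s - j) := by
  rcases lt_or_ge s j with hsj | hjs
  · rw [Nat.choose_eq_zero_of_lt hsj, Nat.cast_zero, zero_mul, zero_mul]
    refine Finset.sum_eq_zero fun l hl => ?_
    rw [Nat.choose_eq_zero_of_lt (k := j) (by grind), Nat.cast_zero, mul_zero, zero_mul]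
  obtain ⟨t, rfl⟩ := Nat.exists_eq_add_of_le hjs
  have hlow : ∑ l ∈ Finset.range j, ((j + t).choose l : R) * l.choose j * x ^ l = 0 :=
    Finset.sum_eq_zero fun l hl => by
      rw [Nat.choose_eq_zero_of_lt (Finset.mem_range.1 hl), Nat.cast_zero, mul_zero, zero_mul]
  rw [add_assoc, Finset.sum_range_add, hlow, zero_add, Nat.add_sub_cancel_left, add_comm 1 x,
    add_pow, Finset.mul_sum]
  refine Finset.sum_congr rfl fun i _ => ?_
  have h := Nat.choose_mul (n := j + t) (k := j + i) (s := j) (Nat.le_add_right j i)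
  rw [Nat.add_sub_cancel_left, Nat.add_sub_cancel_left] at h
  rw [← Nat.cast_mul, h, one_pow, pow_add]
  push_cast
  ring

theorem sum_choose_mul_ring_choose_add_natCast_mul_pow {R : Type*} [CommRing R] [BinomialRing R]
    (r x : R) (s m : ℕ) :
    ∑ l ∈ Finset.range (s + 1), (s.choose l : R) * Ring.choose (r + l) m * x ^ l =
      ∑ k ∈ Finset.range (m + 1),
        Ring.choose r k * (s.choose (m - k) * x ^ (m - k) * (1 + x) ^ (s - (m - k))) := by
  simp_rw [ring_choose_add_natCast, ← sum_choose_mul_choose_mul_pow, Finset.mul_sum,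
    Finset.sum_mul]
  rw [Finset.sum_comm]
  refine Finset.sum_congr rfl fun k _ => Finset.sum_congr rfl fun l _ => ?_
  ring

theorem hasSum_ring_choose_mul_pow (r : ℝ) {x : ℝ} (hx : |x| < 1) :
    HasSum (fun k : ℕ => Ring.choose r k * x ^ k) ((1 + x) ^ r) := by
  have h := Real.one_add_rpow_hasFPowerSeriesOnBall_zero (a := r).hasSum (y := x)
    (by simpa [enorm_eq_nnnorm, ← NNReal.coe_lt_coe] using hx)
  simpa [binomialSeries, FormalMultilinearSeries.coeff_ofScalars, mul_comm] using h

theorem hasSum_ring_choose_mul_pow_mul_rpow (r : ℝ) {a x : ℝ} (hax : |a| < x) :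
    HasSum (fun k : ℕ => Ring.choose r k * a ^ k * x ^ (r - k)) ((a + x) ^ r) := by
  have hx : 0 < x := (abs_nonneg a).trans_lt hax
  have hax' : |a / x| < 1 := by rwa [abs_div, abs_of_pos hx, div_lt_one hx]
  have hfac : x ^ r * (1 + a / x) ^ r = (a + x) ^ r := by
    rw [← Real.mul_rpow hx.le (by linarith [(abs_lt.1 hax').1])]
    congr 1
    field_simp
    ring
  rw [← hfac]
  refine ((hasSum_ring_choose_mul_pow r hax').mul_left (x ^ r)).congr_fun fun k => ?_
  rw [Real.rpow_sub_natCast hx.ne', div_pow]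
  ring

theorem integral_rpow_mul_one_sub_rpow_eq_beta {u v : ℝ} (hu : 0 < u) (hv : 0 < v) :
    ∫ x in (0 : ℝ)..1, x ^ (u - 1) * (1 - x) ^ (v - 1) = beta u v := by
  have h : ((∫ x in (0 : ℝ)..1, x ^ (u - 1) * (1 - x) ^ (v - 1) : ℝ) : ℂ) =
      Complex.betaIntegral u v := by
    rw [← intervalIntegral.integral_ofReal]
    refine intervalIntegral.integral_congr fun x hx => ?_
    rw [uIcc_of_le zero_le_one] at hx
    simp [Complex.ofReal_cpow hx.1, Complex.ofReal_cpow (sub_nonneg.2 hx.2)]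
  rw [ProbabilityTheory.beta_eq_betaIntegralReal u v hu hv, ← h, Complex.ofReal_re]

theorem beta_add_one_right {u v : ℝ} (hv : v ≠ 0) :
    (u + v) * beta u (v + 1) = v * beta u v := by
  rcases eq_or_ne (u + v) 0 with huv | huv
  · simp [beta, huv]
  · rw [beta, beta, ← add_assoc, Real.Gamma_add_one hv, Real.Gamma_add_one huv]
    field_simp

theorem beta_add_one_natCast_sub {p : ℝ} {m : ℕ} (hp : ∀ k : ℕ, p ≠ k) :
    beta (p + 1) (m - p) =
      -((-1) ^ m * (Real.pi / Real.sin (Real.pi * p)) * Ring.choose p m) := by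
  induction m with
  | zero =>
    have h := Real.Gamma_mul_Gamma_one_sub (-p)
    rw [sub_neg_eq_add, mul_neg, Real.sin_neg, div_neg, mul_comm, add_comm] at h
    simp [beta, h]
  | succ m ih =>
    have hm : (m + 1 : ℝ) ≠ 0 := m.cast_add_one_ne_zero
    have hβ := beta_add_one_right (u := p + 1) (v := m - p) (sub_ne_zero.2 (hp m).symm)
    have hc := succ_mul_ring_choose_succ_eq_choose_mul_sub p m
    rw [ih] at hβ
    push_cast at hc ⊢
    rw [← mul_right_inj' hm, add_sub_right_comm, pow_succ]
    linear_combination hβ - (-1) ^ m * (Real.pi / Real.sin (Real.pi * p)) * hc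

theorem image_div_const_add_Ioi {K : Type*} [Field K] [LinearOrder K] [IsStrictOrderedRing K]
    {a : K} (ha : 0 < a) : (fun x : K => x / (a + x)) '' Ioi 0 = Ioo 0 1 := by
  ext y
  constructor
  · rintro ⟨x, hx : 0 < x, rfl⟩
    exact ⟨by positivity, (div_lt_one (by positivity)).2 (lt_add_of_pos_left x ha)⟩
  · rintro ⟨hy0, hy1⟩
    have : 0 < 1 - y := sub_pos.2 hy1
    exact ⟨a * y / (1 - y), mem_Ioi.2 (by positivity), by field_simp; ring⟩

theorem integral_Ioi_rpow_mul_const_add_rpow {a u v : ℝ} (ha : 0 < a) (hu : 0 < u) (hv : 0 < v) :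
    ∫ x in Ioi (0 : ℝ), x ^ (u - 1) * (a + x) ^ (-(u + v)) = a ^ (-v) * beta u v := by
  have hinj : InjOn (fun x : ℝ => x / (a + x)) (Ioi 0) := by
    intro x (hx : 0 < x) y (hy : 0 < y) hxy
    rw [div_eq_div_iff (by positivity) (by positivity)] at hxy
    exact mul_left_cancel₀ ha.ne' (by linear_combination hxy)
  have hderiv (x : ℝ) (hx : x ∈ Ioi 0) :
      HasDerivWithinAt (fun x : ℝ => x / (a + x)) (a / (a + x) ^ 2) (Ioi 0) x := by
    have hax : a + x ≠ 0 := (add_pos ha hx).ne'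
    refine HasDerivAt.hasDerivWithinAt ?_
    simpa using (hasDerivAt_id' x).fun_div ((hasDerivAt_id' x).const_add a) hax
  rw [← integral_rpow_mul_one_sub_rpow_eq_beta hu hv, intervalIntegral.integral_of_le zero_le_one,
    integral_Ioc_eq_integral_Ioo, ← image_div_const_add_Ioi ha,
    integral_image_eq_integral_abs_deriv_smul measurableSet_Ioi hderiv hinj, ← integral_const_mul]
  refine setIntegral_congr_fun measurableSet_Ioi fun x (hx : 0 < x) => ?_
  have hax : 0 < a + x := by positivity
  have hsub : 1 - x / (a + x) = a / (a + x) := by field_simp; ring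
  simp only [smul_eq_mul]
  rw [hsub, abs_of_pos (by positivity), Real.div_rpow hx.le hax.le, Real.div_rpow ha.le hax.le,
    neg_add, Real.rpow_add hax, Real.rpow_sub_one hax.ne', Real.rpow_sub_one hax.ne',
    Real.rpow_sub_one ha.ne', Real.rpow_neg ha.le, Real.rpow_neg hax.le, Real.rpow_neg hax.le]
  have := Real.rpow_pos_of_pos ha v
  have := Real.rpow_pos_of_pos hax u
  have := Real.rpow_pos_of_pos hax v
  field_simp

section BinomialSeries

variable {a u ν : ℝ}

theorem hasSum_integral_Ioi_one_rpow_mul_const_add_rpow (ha : |a| < 1) (huν : u < ν) :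
    HasSum (fun k : ℕ => Ring.choose (-ν) k * a ^ k / (ν - u + k))
      (∫ x in Ioi (1 : ℝ), x ^ (u - 1) * (a + x) ^ (-ν)) := by
  have hpos (k : ℕ) : 0 < ν - u + k := by have := k.cast_nonneg (α := ℝ); linarith
  have hexp (k : ℕ) : u - 1 + (-ν - k) < -1 := by linarith [hpos k]
  have h_int (k : ℕ) : ∫ x in Ioi (1 : ℝ), x ^ (u - 1 + (-ν - k)) = (ν - u + k)⁻¹ := by
    rw [integral_Ioi_rpow_of_lt (hexp k) one_pos, Real.one_rpow, neg_div, ← div_neg, one_div]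
    congr 1
    ring
  have h_norm (k : ℕ) :
      ∫ x in Ioi (1 : ℝ), ‖Ring.choose (-ν) k * a ^ k * x ^ (u - 1 + (-ν - k))‖ =
        |Ring.choose (-ν) k * a ^ k| * (ν - u + k)⁻¹ := by
    rw [← h_int, ← integral_const_mul]
    refine setIntegral_congr_fun measurableSet_Ioi fun x hx => ?_
    have hx0 : 0 < x := zero_lt_one.trans hx
    simp only [norm_mul, Real.norm_eq_abs, abs_mul, Real.abs_rpow_of_nonneg hx0.le, abs_of_pos hx0]
  have h_summable : Summable fun k : ℕ =>
      ∫ x in Ioi (1 : ℝ), ‖Ring.choose (-ν) k * a ^ k * x ^ (u - 1 + (-ν - k))‖ := by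
    simp_rw [h_norm]
    refine Summable.of_nonneg_of_le (fun k => ?_) (fun k => ?_)
      ((hasSum_ring_choose_mul_pow (-ν) ha).summable.abs.mul_right (ν - u)⁻¹)
    · have := hpos k
      positivity
    · have := sub_pos.2 huν
      gcongr
      simp
  have h_expand (x : ℝ) (hx : x ∈ Ioi 1) :
      ∑' k : ℕ, Ring.choose (-ν) k * a ^ k * x ^ (u - 1 + (-ν - k)) =
        x ^ (u - 1) * (a + x) ^ (-ν) := by
    rw [← (hasSum_ring_choose_mul_pow_mul_rpow (-ν) (ha.trans hx)).tsum_eq, ← tsum_mul_left]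
    refine tsum_congr fun k => ?_
    rw [Real.rpow_add (zero_lt_one.trans hx)]
    ring
  have h := hasSum_integral_of_summable_integral_norm
    (fun k => (integrableOn_Ioi_rpow_of_lt (hexp k) one_pos).const_mul _) h_summable
  rw [setIntegral_congr_fun measurableSet_Ioi h_expand] at h
  simpa only [integral_const_mul, h_int, div_eq_mul_inv] using h

theorem intervalIntegrable_rpow_mul_const_add_rpow (ha : 0 < a) (hu : 0 < u) (r : ℝ) :
    IntervalIntegrable (fun x : ℝ => x ^ (u - 1) * (a + x) ^ r) volume 0 1 := by
  refine (intervalIntegral.intervalIntegrable_rpow' (by linarith)).mul_continuousOn ?_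
  refine ContinuousOn.rpow_const (by fun_prop) fun x hx => Or.inl ?_
  rw [uIcc_of_le zero_le_one] at hx
  linarith [hx.1]

theorem integral_rpow_mul_const_add_rpow_by_parts (ha : 0 < a) (hu : 0 < u) (ν : ℝ) :
    (ν - u) * ∫ x in (0 : ℝ)..1, x ^ (u - 1) * (a + x) ^ (-ν) =
      ν * a * (∫ x in (0 : ℝ)..1, x ^ (u - 1) * (a + x) ^ (-(ν + 1))) - (1 + a) ^ (-ν) := by
  have hint₀ := (intervalIntegrable_rpow_mul_const_add_rpow ha hu (-ν)).const_mul (u - ν)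
  have hint₁ := (intervalIntegrable_rpow_mul_const_add_rpow ha hu (-(ν + 1))).const_mul (ν * a)
  have hcont : ContinuousOn (fun x : ℝ => x ^ u * (a + x) ^ (-ν)) (Icc 0 1) := by
    refine ContinuousOn.mul (Real.continuous_rpow_const hu.le).continuousOn ?_
    exact ContinuousOn.rpow_const (by fun_prop) fun x hx => Or.inl (by linarith [hx.1])
  have hderiv (x : ℝ) (hx : x ∈ Ioo 0 1) : HasDerivAt (fun x : ℝ => x ^ u * (a + x) ^ (-ν))
      ((u - ν) * (x ^ (u - 1) * (a + x) ^ (-ν)) +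
        ν * a * (x ^ (u - 1) * (a + x) ^ (-(ν + 1)))) x := by
    have hx0 : 0 < x := hx.1
    have hax : 0 < a + x := by linarith
    refine ((Real.hasDerivAt_rpow_const (Or.inl hx0.ne')).mul
      (((hasDerivAt_id x).const_add a).rpow_const (Or.inl hax.ne'))).congr_deriv ?_
    simp only [id]
    rw [neg_add, ← sub_eq_add_neg, Real.rpow_sub_one hax.ne', Real.rpow_sub_one hx0.ne']
    field_simp
    ring
  have hFTC := intervalIntegral.integral_eq_sub_of_hasDerivAt_of_le zero_le_one hcont hderiv
    (hint₀.add hint₁)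
  rw [intervalIntegral.integral_add hint₀ hint₁, intervalIntegral.integral_const_mul,
    intervalIntegral.integral_const_mul, Real.one_rpow, Real.zero_rpow hu.ne', zero_mul, sub_zero,
    one_mul, add_comm a 1] at hFTC
  linear_combination -hFTC

theorem hasSum_ring_choose_neg_mul_pow_div_of_succ {S : ℝ} (ha : |a| < 1)
    (huν : ∀ k : ℕ, u - ν ≠ k)
    (h : HasSum (fun k : ℕ => Ring.choose (-(ν + 1)) k * a ^ k / (u - (ν + 1) - k)) S) :
    HasSum (fun k : ℕ => Ring.choose (-ν) k * a ^ k / (u - ν - k))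
      ((ν * a * S - (1 + a) ^ (-ν)) / (ν - u)) := by
  have hbin := hasSum_ring_choose_mul_pow (-ν) ha
  have hne (k : ℕ) : u - ν - k ≠ 0 := sub_ne_zero.2 (huν k)
  have hνu : ν - u ≠ 0 := fun h => huν 0 (by push_cast; linarith)
  have hshift : HasSum (fun k : ℕ => Ring.choose (-ν) k * a ^ k * k / (u - ν - k))
      (-(ν * a * S)) := by
    rw [← hasSum_nat_add_iff' 1]
    convert! h.mul_left (-(ν * a)) using 1
    · funext k
      have hc := succ_mul_ring_choose_succ_eq_mul_choose_sub_one (-ν) k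
      rw [mul_right_comm, mul_comm (Ring.choose _ _), hc, neg_add', pow_succ]
      push_cast
      ring
    · simp
  convert! (hshift.neg.sub hbin).div_const (ν - u) using 1
  · funext k
    have := hne k
    field_simp
    ring
  · ring

theorem hasSum_integral_rpow_mul_const_add_rpow_of_lt (ha0 : 0 < a) (ha1 : a < 1)
    (hu : 0 < u) (huν : u < ν) :
    HasSum (fun k : ℕ => Ring.choose (-ν) k * a ^ k / (u - ν - k))
      ((∫ x in (0 : ℝ)..1, x ^ (u - 1) * (a + x) ^ (-ν)) - a ^ (u - ν) * beta u (ν - u)) := by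
  have hIoi := integral_Ioi_rpow_mul_const_add_rpow ha0 hu (sub_pos.2 huν)
  rw [add_sub_cancel, neg_sub] at hIoi
  have hint : IntegrableOn (fun x : ℝ => x ^ (u - 1) * (a + x) ^ (-ν)) (Ioi 0) := by
    refine Integrable.of_integral_ne_zero (hIoi.trans_ne (ne_of_gt ?_))
    have := ProbabilityTheory.beta_pos hu (sub_pos.2 huν)
    positivity
  have hsplit := intervalIntegral.integral_interval_add_Ioi hint
    (hint.mono_set (Ioi_subset_Ioi zero_le_one))
  rw [hIoi] at hsplit
  rw [← hsplit, sub_add_cancel_left]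
  have hIoi_one := hasSum_integral_Ioi_one_rpow_mul_const_add_rpow
    (abs_lt.2 ⟨by linarith, ha1⟩) huν
  refine hIoi_one.neg.congr_fun fun k => ?_
  rw [← div_neg]
  congr 1
  ring

theorem hasSum_integral_rpow_mul_const_add_rpow (ha0 : 0 < a) (ha1 : a < 1)
    (hu : 0 < u) (huν : ∀ k : ℕ, u - ν ≠ k) :
    HasSum (fun k : ℕ => Ring.choose (-ν) k * a ^ k / (u - ν - k))
      ((∫ x in (0 : ℝ)..1, x ^ (u - 1) * (a + x) ^ (-ν)) - a ^ (u - ν) * beta u (ν - u)) := by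
  obtain ⟨N, hN⟩ := exists_nat_gt (u - ν)
  induction N generalizing ν with
  | zero => exact hasSum_integral_rpow_mul_const_add_rpow_of_lt ha0 ha1 hu (by simpa using hN)
  | succ N ih =>
    have hsucc := ih (ν := ν + 1)
      (fun k hk => huν (k + 1) (by push_cast; linarith)) (by push_cast at hN; linarith)
    have hνu : ν - u ≠ 0 := fun h => huν 0 (by push_cast; linarith)
    have hparts := integral_rpow_mul_const_add_rpow_by_parts ha0 hu ν
    have hβ := beta_add_one_right (u := u) hνu
    have hpow : a ^ (u - (ν + 1)) * a = a ^ (u - ν) := by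
      rw [← Real.rpow_add_one ha0.ne']
      ring_nf
    rw [add_sub_cancel, ← add_sub_right_comm] at hβ
    convert hasSum_ring_choose_neg_mul_pow_div_of_succ (abs_lt.2 ⟨by linarith, ha1⟩) huν hsucc
      using 1
    rw [eq_div_iff hνu]
    linear_combination hparts + ν * beta u (ν + 1 - u) * hpow + a ^ (u - ν) * hβ

theorem integral_rpow_mul_one_sub_pow_mul_const_add_rpow (ha : 0 < a) (hu : 0 < u) (r : ℝ)
    (s : ℕ) :
    ∫ x in (0 : ℝ)..1, x ^ (u - 1) * (1 - x) ^ s * (a + x) ^ r =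
      ∑ l ∈ Finset.range (s + 1), (-1) ^ l * (s.choose l : ℝ) *
        ∫ x in (0 : ℝ)..1, x ^ (u + l - 1) * (a + x) ^ r := by
  have hint (l : ℕ) := (intervalIntegrable_rpow_mul_const_add_rpow ha
    (add_pos_of_pos_of_nonneg hu l.cast_nonneg) r).const_mul ((-1) ^ l * (s.choose l : ℝ))
  simp_rw [← intervalIntegral.integral_const_mul]
  rw [← intervalIntegral.integral_finsetSum fun l _ => hint l]
  refine intervalIntegral.integral_congr_ae (Eventually.of_forall fun x hx => ?_)
  rw [uIoc_of_le zero_le_one] at hx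
  rw [sub_eq_neg_add 1 x, add_pow, Finset.mul_sum, Finset.sum_mul]
  refine Finset.sum_congr rfl fun l _ => ?_
  rw [add_sub_right_comm, Real.rpow_add_natCast hx.1.ne', neg_pow x, one_pow]
  ring

theorem hasSum_integral_rpow_mul_one_sub_pow_mul_const_add_rpow (ha0 : 0 < a)
    (ha1 : a < 1) (hu : 0 < u) (huν : ∀ k : ℤ, u - ν ≠ k) (s : ℕ) :
    HasSum (fun k : ℕ => Ring.choose (-ν) k * a ^ k *
        ∑ l ∈ Finset.range (s + 1), (-1) ^ l * (s.choose l : ℝ) / (u + l - ν - k))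
      ((∫ x in (0 : ℝ)..1, x ^ (u - 1) * (1 - x) ^ s * (a + x) ^ (-ν)) -
        ∑ l ∈ Finset.range (s + 1),
          (-1) ^ l * (s.choose l : ℝ) * (a ^ (u + l - ν) * beta (u + l) (ν - (u + l)))) := by
  have hl (l : ℕ) := hasSum_integral_rpow_mul_const_add_rpow ha0 ha1 (u := u + l) (ν := ν)
    (by positivity) fun k hk => huν (k - l) (by push_cast; linarith)
  rw [integral_rpow_mul_one_sub_pow_mul_const_add_rpow ha0 hu, ← Finset.sum_sub_distrib]
  simp_rw [← mul_sub, Finset.mul_sum]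
  refine hasSum_sum fun l _ => ((hl l).mul_left _).congr_fun fun k => ?_
  ring

end BinomialSeries

theorem beta_one_sub_add_natCast {μ : ℝ} (hμ : ∀ k : ℤ, μ ≠ k) (l m : ℕ) :
    beta (1 - μ + l) (m + 1 - (1 - μ + l)) =
      (-1) ^ l * ((-1) ^ m * (Real.pi / Real.sin (Real.pi * μ)) * Ring.choose (-μ + l) m) := by
  have hsin : Real.sin (Real.pi * (-μ + l)) = -((-1) ^ l * Real.sin (Real.pi * μ)) := by
    rw [← Real.sin_nat_mul_pi_sub]
    ring_nf
  have hβ := beta_add_one_natCast_sub (p := -μ + l) (m := m)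
    fun k hk => hμ (l - k) (by push_cast; linarith)
  rw [hsin] at hβ
  rw [show 1 - μ + l = -μ + l + 1 by ring, add_sub_add_right_eq_sub, hβ]
  rcases neg_one_pow_eq_or ℝ l with h | h <;> rw [h] <;> ring

theorem sum_neg_one_pow_mul_choose_mul_rpow_mul_beta {a μ : ℝ} (ha : 0 < a)
    (hμ : ∀ k : ℤ, μ ≠ k) (s m : ℕ) :
    ∑ l ∈ Finset.range (s + 1), (-1) ^ l * (s.choose l : ℝ) *
        (a ^ (1 - μ + l - (m + 1)) * beta (1 - μ + l) (m + 1 - (1 - μ + l))) =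
      (-1) ^ m * (Real.pi / Real.sin (Real.pi * μ)) *
        ∑ k ∈ Finset.range (m + 1), Ring.choose (-μ) k *
          (s.choose (m - k) * (1 + a) ^ (s - (m - k)) * a ^ (-(k + μ))) := by
  have hpow (l : ℕ) : a ^ (1 - μ + l - (m + 1)) = a ^ (-(m + μ)) * a ^ l := by
    rw [← Real.rpow_add_natCast ha.ne']
    ring_nf
  have hpow_sub {k : ℕ} (hkm : k ≤ m) : a ^ (-(k + μ)) = a ^ (-(m + μ)) * a ^ (m - k) := by
    rw [← Real.rpow_add_natCast ha.ne', Nat.cast_sub hkm]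
    ring_nf
  trans (-1) ^ m * (Real.pi / Real.sin (Real.pi * μ)) * (a ^ (-(m + μ)) *
    ∑ l ∈ Finset.range (s + 1), (s.choose l : ℝ) * Ring.choose (-μ + l) m * a ^ l)
  · simp_rw [Finset.mul_sum]
    refine Finset.sum_congr rfl fun l _ => ?_
    rw [beta_one_sub_add_natCast hμ, hpow]
    rcases neg_one_pow_eq_or ℝ l with h | h <;> rw [h] <;> ring
  · rw [sum_choose_mul_ring_choose_add_natCast_mul_pow, Finset.mul_sum]
    congr 1
    refine Finset.sum_congr rfl fun k hkm => ?_
    rw [hpow_sub (Finset.mem_range_succ_iff.1 hkm)]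
    ring

theorem natCast_choose_mul_pow_sub_eq_factorial_mul_zpow_div_Gamma (s j : ℕ) (x : ℝ) :
    s.choose j * x ^ (s - j) =
      s.factorial * x ^ ((s : ℤ) - j) / (j.factorial * Real.Gamma (s - j + 1)) := by
  rw [mul_div_right_comm, ← natCast_choose_eq_factorial_div_Gamma]
  rcases le_or_gt j s with hjs | hsj
  · rw [← Nat.cast_sub hjs, zpow_natCast]
  · simp [Nat.choose_eq_zero_of_lt hsj]

theorem ring_choose_neg_mul_choose_mul_pow_mul_rpow_eq {ζ : ℝ} (hζ : 0 ≤ ζ) (μ : ℝ) (s : ℕ)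
    {m k : ℕ} (hkm : k ≤ m) :
    Ring.choose (-μ) k * (s.choose (m - k) * (1 + ζ⁻¹) ^ (s - (m - k)) * ζ⁻¹ ^ (-(k + μ))) =
      s.factorial * ((-1) ^ k * (∏ i ∈ Finset.range k, (μ + i)) *
        (1 + ζ⁻¹) ^ ((s : ℤ) - (m + 1 : ℕ) + k + 1) * ζ ^ (k + μ) /
          (k.factorial * Real.Gamma (s - (m + 1 : ℕ) + k + 2) * (m + 1 - k - 1).factorial)) := by
  have hexp : (s : ℤ) - (m + 1 : ℕ) + k + 1 = s - (m - k : ℕ) := by lia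
  have hgamma : (s : ℝ) - (m + 1 : ℕ) + k + 2 = s - (m - k : ℕ) + 1 := by
    push_cast [hkm]
    ring
  have hfac : m + 1 - k - 1 = m - k := by lia
  rw [hexp, hgamma, hfac, ring_choose_neg_eq_prod_div_factorial,
    natCast_choose_mul_pow_sub_eq_factorial_mul_zpow_div_Gamma,
    Real.rpow_neg (inv_nonneg.2 hζ), Real.inv_rpow hζ, inv_inv]
  ring

theorem integral_rpow_mul_one_sub_pow_div_const_add_pow {a : ℝ} (ha : 0 ≤ a) (r : ℝ) (s n : ℕ) :
    ∫ x in (0 : ℝ)..1, x ^ r * (1 - x) ^ s / (a + x) ^ n =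
      ∫ x in (0 : ℝ)..1, x ^ r * (1 - x) ^ s * (a + x) ^ (-(n : ℝ)) := by
  refine intervalIntegral.integral_congr fun x hx => ?_
  rw [uIcc_of_le zero_le_one] at hx
  simp only [Real.rpow_neg (add_nonneg ha hx.1), Real.rpow_natCast, div_eq_mul_inv]

theorem stmt_18_general (n s : ℕ) (hn : 1 ≤ n) (μ : ℝ) (hμ1 : μ < 1) (hμ : ∀ k : ℤ, μ ≠ k)
    (ζ : ℝ) (hζ : 1 < ζ) :
    ∃ A : ℝ,
      HasSum (fun k : ℕ =>
        (-1 : ℝ) ^ k * (Nat.choose (n + k - 1) k : ℝ) * ζ⁻¹ ^ k *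
          ∑ l ∈ Finset.range (s + 1),
            (-1 : ℝ) ^ l * (Nat.factorial s : ℝ) /
              ((Nat.factorial l : ℝ) * (Nat.factorial (s - l) : ℝ) *
                ((l : ℝ) - n - k - μ + 1))) A ∧
      (∫ x in (0 : ℝ)..1, x ^ (-μ) * (1 - x) ^ s / (ζ⁻¹ + x) ^ n) =
        A + (-1 : ℝ) ^ (n - 1) * (Real.pi * (Nat.factorial s : ℝ) /
            Real.sin (Real.pi * μ)) *
          ∑ k ∈ Finset.range n,
            (-1 : ℝ) ^ k * (∏ i ∈ Finset.range k, (μ + (i : ℝ))) *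
              (1 + ζ⁻¹) ^ ((s : ℤ) - (n : ℤ) + (k : ℤ) + 1) * ζ ^ ((k : ℝ) + μ) /
              ((Nat.factorial k : ℝ) * Real.Gamma ((s : ℝ) - n + k + 2) *
                (Nat.factorial (n - k - 1) : ℝ)) := by
  obtain ⟨m, rfl⟩ := Nat.exists_eq_add_of_le' hn
  have hζ0 : 0 < ζ := one_pos.trans hζ
  have ha := inv_pos.2 hζ0
  have hsum := hasSum_integral_rpow_mul_one_sub_pow_mul_const_add_rpow (u := 1 - μ)
    (ν := (m + 1 : ℕ)) ha (inv_lt_one_of_one_lt₀ hζ) (sub_pos.2 hμ1)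
    (fun k hk => hμ (-m - k) (by push_cast at hk ⊢; linarith)) s
  refine ⟨_, hsum.congr_fun fun k => ?_, ?_⟩
  · rw [ring_choose_neg_natCast]
    congr 1
    refine Finset.sum_congr rfl fun l hl => ?_
    rw [Nat.cast_choose ℝ (Finset.mem_range_succ_iff.1 hl), ← mul_div_assoc, div_div]
    ring_nf
  · rw [integral_rpow_mul_one_sub_pow_div_const_add_pow ha.le, ← sub_sub_cancel_left 1 μ,
      ← sub_eq_iff_eq_add', sub_sub_cancel, Nat.cast_succ,
      sum_neg_one_pow_mul_choose_mul_rpow_mul_beta ha hμ, Nat.add_sub_cancel, Finset.mul_sum,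
      Finset.mul_sum]
    refine Finset.sum_congr rfl fun k hk => ?_
    rw [ring_choose_neg_mul_choose_mul_pow_mul_rpow_eq hζ0.le μ s (Finset.mem_range_succ_iff.1 hk)]
    push_cast
    ring

/-- Series representation of `∫_0^1 x^{-μ}(1-x)^s/(ζ^{-1}+x)^n dx` (up to a factor, the
Gauss hypergeometric function `₂F₁(n, 1−μ; s−μ+2; −ζ)`) for positive integers `n`, `s`,
`0 < μ < 1` and `ζ > 1`. The Pochhammer symbol `(μ)_k` is `∏_{i<k}(μ+i)`; the factorial
`(s-n+k+1)!`, whose argument may be negative, is written as `Γ(s-n+k+2)` (Mathlib's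
`Real.Gamma` vanishes at nonpositive integers, making those terms zero);
`(1+ζ^{-1})^{s-n+k+1}` is an integer power. -/
theorem stmt_18 (n s : ℕ) (hn : 1 ≤ n) (hs : 1 ≤ s)
    (μ : ℝ) (hμ0 : 0 < μ) (hμ1 : μ < 1) (ζ : ℝ) (hζ : 1 < ζ) :
    ∃ A : ℝ,
      HasSum (fun k : ℕ =>
        (-1 : ℝ) ^ k * (Nat.choose (n + k - 1) k : ℝ) * ζ⁻¹ ^ k *
          ∑ l ∈ Finset.range (s + 1),
            (-1 : ℝ) ^ l * (Nat.factorial s : ℝ) /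
              ((Nat.factorial l : ℝ) * (Nat.factorial (s - l) : ℝ) *
                ((l : ℝ) - n - k - μ + 1))) A ∧
      (∫ x in (0 : ℝ)..1, x ^ (-μ) * (1 - x) ^ s / (ζ⁻¹ + x) ^ n) =
        A + (-1 : ℝ) ^ (n - 1) * (Real.pi * (Nat.factorial s : ℝ) /
            Real.sin (Real.pi * μ)) *
          ∑ k ∈ Finset.range n,
            (-1 : ℝ) ^ k * (∏ i ∈ Finset.range k, (μ + (i : ℝ))) *
              (1 + ζ⁻¹) ^ ((s : ℤ) - (n : ℤ) + (k : ℤ) + 1) * ζ ^ ((k : ℝ) + μ) /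
              ((Nat.factorial k : ℝ) * Real.Gamma ((s : ℝ) - n + k + 2) *
                (Nat.factorial (n - k - 1) : ℝ)) :=
  stmt_18_general n s hn μ hμ1 (by rintro k rfl; norm_cast at hμ0 hμ1; lia) ζ hζ
end

section
/- Let 0 < a < 1, let n ≥ 1 be an integer and let ω > 0. Then ∫_0^∞ e^{-x} x^{a-1}/(ω + x)^n dx = ((-1)^n π/(sin(πa) (n-1)!)) Σ_{k=0}^{∞} ((n+k-1)!/(Γ(n+k+1-a) k!)) ω^k + (-1)^{n+1} Γ(a) e^{ω} ω^{a-1} Σ_{k=0}^{n-1} (-1)^k Γ(k+1-a)/(k! (n-1-k)! ω^k), where Γ is the Gamma function and the infinite series converges. -/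
open Filter MeasureTheory Set

/-!
Integrating `e^{-x - ωt - xt} x^{a-1} t^{n-1}` over `x, t > 0` in both orders gives Kummer's
transformation
`Γ(n) ∫_0^∞ e^{-x} x^{a-1} (ω+x)^{-n} dx = Γ(a) ∫_0^∞ e^{-ωt} t^{n-1} (1+t)^{-a} dt`.
With `u = 1 + t` the right-hand integral is `e^ω ∫_1^∞ e^{-ωu} (u-1)^{n-1} u^{-a} du`, and since
`a < 1` one may write `∫_1^∞ = ∫_0^∞ - ∫_0^1`. In `∫_0^∞` the binomial theorem leaves finitely many
Gamma integrals, which give the finite sum; in `∫_0^1` the expansion of `e^{ω(1-u)}` leaves Beta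
integrals, which give the infinite series. The reflection formula reconciles the constants.
-/

section Gamma

theorem integrableOn_rpow_mul_exp_neg_mul_Ioi {s r : ℝ} (hs : 0 < s) (hr : 0 < r) :
    IntegrableOn (fun t : ℝ => t ^ (s - 1) * Real.exp (-(r * t))) (Ioi 0) := by
  simpa only [Real.rpow_one, neg_mul] using
    integrableOn_rpow_mul_exp_neg_mul_rpow (by linarith : -1 < s - 1) one_pos hr

theorem rpow_sub_one_mul_add_pow_mul_exp_neg_mul_eq_sum {u : ℝ} (hu : 0 < u) (s r y : ℝ) (m : ℕ) :
    u ^ (s - 1) * (u + y) ^ m * Real.exp (-(r * u)) =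
      ∑ k ∈ Finset.range (m + 1),
        y ^ (m - k) * m.choose k * (u ^ (s + k - 1) * Real.exp (-(r * u))) := by
  rw [add_pow, Finset.mul_sum, Finset.sum_mul]
  refine Finset.sum_congr rfl fun k _ => ?_
  rw [add_sub_right_comm, Real.rpow_add_natCast hu.ne']
  ring

variable {s r : ℝ}

theorem integrableOn_rpow_mul_add_pow_mul_exp_neg_mul_Ioi (hs : 0 < s) (hr : 0 < r) (y : ℝ)
    (m : ℕ) :
    IntegrableOn (fun u : ℝ => u ^ (s - 1) * (u + y) ^ m * Real.exp (-(r * u))) (Ioi 0) := by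
  refine IntegrableOn.congr_fun (integrable_finsetSum _ fun k _ => ?_)
    (fun u hu => (rpow_sub_one_mul_add_pow_mul_exp_neg_mul_eq_sum hu s r y m).symm)
    measurableSet_Ioi
  exact (integrableOn_rpow_mul_exp_neg_mul_Ioi (by positivity : 0 < s + k) hr).const_mul _

theorem integral_rpow_mul_add_pow_mul_exp_neg_mul_Ioi (hs : 0 < s) (hr : 0 < r) (y : ℝ) (m : ℕ) :
    ∫ u in Ioi (0 : ℝ), u ^ (s - 1) * (u + y) ^ m * Real.exp (-(r * u)) =
      ∑ k ∈ Finset.range (m + 1),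
        y ^ (m - k) * m.choose k * ((1 / r) ^ (s + k) * Real.Gamma (s + k)) := by
  have hpos (k : ℕ) : 0 < s + k := by positivity
  rw [setIntegral_congr_fun measurableSet_Ioi fun u hu =>
      rpow_sub_one_mul_add_pow_mul_exp_neg_mul_eq_sum hu s r y m,
    integral_finsetSum _ fun k _ => (integrableOn_rpow_mul_exp_neg_mul_Ioi (hpos k) hr).const_mul _]
  refine Finset.sum_congr rfl fun k _ => ?_
  rw [integral_const_mul, Real.integral_rpow_mul_exp_neg_mul_Ioi (hpos k) hr]

theorem integral_rpow_mul_sub_one_pow_mul_exp_neg_mul_Ioi (hs : 0 < s) (hr : 0 < r) (m : ℕ) :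
    ∫ u in Ioi (0 : ℝ), u ^ (s - 1) * (u - 1) ^ m * Real.exp (-(r * u)) =
      (-1) ^ m * m.factorial * r ^ (-s) * ∑ k ∈ Finset.range (m + 1),
        (-1) ^ k * Real.Gamma (k + s) / (k.factorial * (m - k).factorial * r ^ k) := by
  have h := integral_rpow_mul_add_pow_mul_exp_neg_mul_Ioi hs hr (-1) m
  simp only [← sub_eq_add_neg] at h
  rw [h, Finset.mul_sum]
  refine Finset.sum_congr rfl fun k hk => ?_
  obtain ⟨j, rfl⟩ := Nat.exists_eq_add_of_le (Finset.mem_range_succ_iff.1 hk)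
  have hpow : (1 / r) ^ (s + k) = r ^ (-s) / r ^ k := by
    rw [one_div, Real.inv_rpow hr.le, ← Real.rpow_neg hr.le, neg_add', Real.rpow_sub_natCast hr.ne']
  have hsign : (-1 : ℝ) ^ (k + j) * (-1) ^ k = (-1) ^ j := by
    rw [pow_add, mul_right_comm, ← mul_pow, neg_one_mul, neg_neg, one_pow, one_mul]
  rw [hpow, Nat.cast_choose ℝ (Nat.le_add_right k j), Nat.add_sub_cancel_left, ← hsign, add_comm s]
  field_simp

end Gamma

section Beta

open ProbabilityTheory (beta)

variable {b c : ℝ}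

theorem ofReal_rpow_mul_one_sub_rpow {v : ℝ} (hv : v ∈ Icc 0 1) (b c : ℝ) :
    ((v ^ (b - 1) * (1 - v) ^ (c - 1) : ℝ) : ℂ) =
      (v : ℂ) ^ ((b : ℂ) - 1) * (1 - (v : ℂ)) ^ ((c : ℂ) - 1) := by
  push_cast [Complex.ofReal_cpow hv.1, Complex.ofReal_cpow (sub_nonneg.2 hv.2)]
  rfl

theorem intervalIntegrable_rpow_mul_one_sub_rpow (hb : 0 < b) (hc : 0 < c) :
    IntervalIntegrable (fun v : ℝ => v ^ (b - 1) * (1 - v) ^ (c - 1)) volume 0 1 := by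
  have h := Complex.betaIntegral_convergent (u := b) (v := c) (by simpa) (by simpa)
  rw [intervalIntegrable_iff_integrableOn_Ioc_of_le zero_le_one] at h ⊢
  refine IntegrableOn.congr_fun h.re (fun v hv => ?_) measurableSet_Ioc
  simp only [← ofReal_rpow_mul_one_sub_rpow (Ioc_subset_Icc_self hv), RCLike.re_to_complex,
    Complex.ofReal_re]

theorem integral_rpow_mul_one_sub_rpow (hb : 0 < b) (hc : 0 < c) :
    ∫ v in (0 : ℝ)..1, v ^ (b - 1) * (1 - v) ^ (c - 1) = beta b c := by
  rw [ProbabilityTheory.beta_eq_betaIntegralReal b c hb hc, Complex.betaIntegral,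
    ← intervalIntegral.integral_congr fun v hv => ofReal_rpow_mul_one_sub_rpow
      (uIcc_of_le (zero_le_one' ℝ) ▸ hv) b c, intervalIntegral.integral_ofReal, Complex.ofReal_re]

theorem hasSum_beta_mul_pow_div_factorial (hb : 0 < b) (hc : 0 < c) (w : ℝ) :
    HasSum (fun k : ℕ => beta (b + k) c * (w ^ k / k.factorial))
      (∫ v in (0 : ℝ)..1, v ^ (b - 1) * (1 - v) ^ (c - 1) * Real.exp (w * v)) := by
  have hexp (x : ℝ) : HasSum (fun k : ℕ => x ^ k / k.factorial) (Real.exp x) :=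
    Real.exp_eq_exp_ℝ ▸ NormedSpace.expSeries_div_hasSum_exp x
  have hterm (k : ℕ) : beta (b + k) c * (w ^ k / k.factorial) =
      ∫ v in (0 : ℝ)..1, v ^ (b - 1) * (1 - v) ^ (c - 1) * ((w * v) ^ k / k.factorial) := by
    rw [← integral_rpow_mul_one_sub_rpow (by positivity) hc,
      ← intervalIntegral.integral_mul_const]
    refine intervalIntegral.integral_congr_ae (.of_forall fun v hv => ?_)
    rw [uIoc_of_le zero_le_one] at hv
    rw [add_sub_right_comm, Real.rpow_add_natCast hv.1.ne', mul_pow]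
    ring
  simp only [hterm]
  refine intervalIntegral.hasSum_integral_of_dominated_convergence
    (fun k v => v ^ (b - 1) * (1 - v) ^ (c - 1) * (|w| ^ k / k.factorial))
    (fun k => Measurable.aestronglyMeasurable (by fun_prop))
    (fun k => .of_forall fun v hv => ?_) (.of_forall fun v _ => (hexp |w|).summable.mul_left _) ?_
    (.of_forall fun v _ => (hexp (w * v)).mul_left _)
  · rw [uIoc_of_le zero_le_one] at hv
    have hv0 := hv.1.le
    have hv1 := sub_nonneg.2 hv.2
    rw [norm_mul, Real.norm_of_nonneg (by positivity), norm_div, norm_pow, norm_mul,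
      Real.norm_natCast, Real.norm_of_nonneg hv0, Real.norm_eq_abs]
    gcongr
    exact mul_le_of_le_one_right (abs_nonneg w) hv.2
  · simp only [fun v : ℝ => ((hexp |w|).mul_left (v ^ (b - 1) * (1 - v) ^ (c - 1))).tsum_eq]
    exact (intervalIntegrable_rpow_mul_one_sub_rpow hb hc).mul_const _

theorem hasSum_factorial_div_Gamma_mul_pow (hc : 0 < c) (m : ℕ) (w : ℝ) :
    HasSum (fun k : ℕ => (m + k).factorial / (Real.Gamma (m + 1 + k + c) * k.factorial) * w ^ k)
      ((∫ v in (0 : ℝ)..1, v ^ m * (1 - v) ^ (c - 1) * Real.exp (w * v)) / Real.Gamma c) := by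
  have h := (hasSum_beta_mul_pow_div_factorial (by positivity : (0 : ℝ) < m + 1) hc w).div_const
    (Real.Gamma c)
  simp only [add_sub_cancel_right, Real.rpow_natCast] at h
  refine h.congr_fun fun k => ?_
  have hΓ : Real.Gamma (m + 1 + k) = (m + k).factorial := by
    rw [← Real.Gamma_nat_eq_factorial]; push_cast; ring_nf
  rw [beta, hΓ]
  field_simp

end Beta

section Kummer

/-- The integrand of the double integral over `(0, ∞)²` behind Kummer's transformation
`U(a, a - b + 1, z) = z ^ (b - a) U(b, b - a + 1, z)`: each of its two partial integrals is a Gamma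
integral. -/
noncomputable def kummerKernel (a b p q x t : ℝ) : ℝ :=
  x ^ (a - 1) * t ^ (b - 1) * Real.exp (-(p * x + q * t + x * t))

theorem kummerKernel_swap (a b p q x t : ℝ) :
    kummerKernel a b p q x t = kummerKernel b a q p t x := by
  unfold kummerKernel
  ring_nf

theorem kummerKernel_eq_mul (a b p q x t : ℝ) :
    kummerKernel a b p q x t =
      x ^ (a - 1) * Real.exp (-(p * x)) * (t ^ (b - 1) * Real.exp (-((q + x) * t))) := by
  rw [kummerKernel, mul_mul_mul_comm, ← Real.exp_add]
  ring_nf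

variable {a b p q : ℝ}

theorem integral_kummerKernel {x : ℝ} (hb : 0 < b) (hq : 0 < q) (hx : 0 < x) :
    ∫ t in Ioi (0 : ℝ), kummerKernel a b p q x t =
      Real.Gamma b * (x ^ (a - 1) * Real.exp (-(p * x)) * (q + x) ^ (-b)) := by
  have hqx := add_pos hq hx
  simp only [kummerKernel_eq_mul]
  rw [integral_const_mul, Real.integral_rpow_mul_exp_neg_mul_Ioi hb hqx, one_div,
    Real.inv_rpow hqx.le, ← Real.rpow_neg hqx.le]
  ring

theorem integrableOn_rpow_mul_exp_neg_mul_mul_add_rpow_neg (ha : 0 < a) (hb : 0 < b)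
    (hp : 0 < p) (hq : 0 < q) :
    IntegrableOn (fun x => x ^ (a - 1) * Real.exp (-(p * x)) * (q + x) ^ (-b)) (Ioi 0) := by
  refine ((integrableOn_rpow_mul_exp_neg_mul_Ioi ha hp).mul_const (q ^ (-b))).mono'
    (Measurable.aestronglyMeasurable (by fun_prop))
    (ae_restrict_of_forall_mem measurableSet_Ioi fun x (hx : 0 < x) => ?_)
  rw [Real.norm_of_nonneg (by positivity)]
  gcongr ?_ * ?_
  exact Real.rpow_le_rpow_of_nonpos hq (by linarith) (by linarith)

theorem integrable_uncurry_kummerKernel (ha : 0 < a) (hb : 0 < b) (hp : 0 < p) (hq : 0 < q) :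
    Integrable (Function.uncurry (kummerKernel a b p q))
      ((volume.restrict (Ioi 0)).prod (volume.restrict (Ioi 0))) := by
  have hmeas : Measurable (Function.uncurry (kummerKernel a b p q)) := by
    unfold Function.uncurry kummerKernel
    fun_prop
  refine (integrable_prod_iff hmeas.aestronglyMeasurable).2
    ⟨ae_restrict_of_forall_mem measurableSet_Ioi fun x (hx : 0 < x) => ?_, ?_⟩
  · simp only [Function.uncurry_apply_pair, kummerKernel_eq_mul]
    exact (integrableOn_rpow_mul_exp_neg_mul_Ioi hb (add_pos hq hx)).const_mul _
  · refine IntegrableOn.congr_fun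
      ((integrableOn_rpow_mul_exp_neg_mul_mul_add_rpow_neg ha hb hp hq).const_mul (Real.Gamma b))
      (fun x (hx : 0 < x) => ?_) measurableSet_Ioi
    rw [← integral_kummerKernel hb hq hx]
    refine setIntegral_congr_fun measurableSet_Ioi fun t (ht : 0 < t) => ?_
    exact (Real.norm_of_nonneg (by unfold kummerKernel; positivity)).symm

theorem Gamma_mul_integral_rpow_mul_exp_neg_mul_mul_add_rpow_neg (ha : 0 < a) (hb : 0 < b)
    (hp : 0 < p) (hq : 0 < q) :
    Real.Gamma b * ∫ x in Ioi (0 : ℝ), x ^ (a - 1) * Real.exp (-(p * x)) * (q + x) ^ (-b) =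
      Real.Gamma a * ∫ t in Ioi (0 : ℝ), t ^ (b - 1) * Real.exp (-(q * t)) * (p + t) ^ (-a) := by
  calc Real.Gamma b * ∫ x in Ioi (0 : ℝ), x ^ (a - 1) * Real.exp (-(p * x)) * (q + x) ^ (-b)
      = ∫ x in Ioi (0 : ℝ), ∫ t in Ioi (0 : ℝ), kummerKernel a b p q x t := by
        rw [← integral_const_mul]
        exact setIntegral_congr_fun measurableSet_Ioi fun x hx =>
          (integral_kummerKernel hb hq hx).symm
    _ = ∫ t in Ioi (0 : ℝ), ∫ x in Ioi (0 : ℝ), kummerKernel b a q p t x := by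
        simp only [kummerKernel_swap b a q p]
        exact integral_integral_swap (integrable_uncurry_kummerKernel ha hb hp hq)
    _ = Real.Gamma a * ∫ t in Ioi (0 : ℝ), t ^ (b - 1) * Real.exp (-(q * t)) * (p + t) ^ (-a) := by
        rw [← integral_const_mul]
        exact setIntegral_congr_fun measurableSet_Ioi fun t ht => integral_kummerKernel ha hp ht

theorem integral_exp_neg_mul_rpow_div_add_pow (ha : 0 < a) (m : ℕ) (hq : 0 < q) :
    ∫ x in Ioi (0 : ℝ), Real.exp (-x) * x ^ (a - 1) / (q + x) ^ (m + 1) =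
      Real.Gamma a / m.factorial *
        ∫ t in Ioi (0 : ℝ), t ^ m * (1 + t) ^ (-a) * Real.exp (-(q * t)) := by
  have h := Gamma_mul_integral_rpow_mul_exp_neg_mul_mul_add_rpow_neg ha
    (by positivity : (0 : ℝ) < m + 1) one_pos hq
  rw [Real.Gamma_nat_eq_factorial] at h
  rw [div_mul_eq_mul_div, eq_div_iff (by positivity), mul_comm]
  simp only [add_sub_cancel_right, Real.rpow_natCast, one_mul] at h
  convert h using 2
  · refine setIntegral_congr_fun measurableSet_Ioi fun x (hx : 0 < x) => ?_
    rw [Real.rpow_neg (by positivity), ← Nat.cast_add_one, Real.rpow_natCast]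
    ring
  · simp only [mul_right_comm]

end Kummer

theorem setIntegral_Ioi_comp_add_left {E : Type*} [NormedAddCommGroup E] [NormedSpace ℝ E]
    (f : ℝ → E) (c d : ℝ) : ∫ t in Ioi d, f (c + t) = ∫ u in Ioi (c + d), f u := by
  rw [← (measurePreserving_add_left volume c).setIntegral_preimage_emb
    (measurableEmbedding_addLeft c) f (Ioi (c + d)), preimage_const_add_Ioi, add_sub_cancel_left]

theorem integral_pow_mul_one_add_rpow_mul_exp_neg_mul_Ioi {s r : ℝ} (hs : 0 < s) (hr : 0 < r)
    (m : ℕ) :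
    ∫ t in Ioi (0 : ℝ), t ^ m * (1 + t) ^ (s - 1) * Real.exp (-(r * t)) =
      Real.exp r * (∫ u in Ioi (0 : ℝ), u ^ (s - 1) * (u - 1) ^ m * Real.exp (-(r * u))) -
        (-1) ^ m * ∫ v in (0 : ℝ)..1, v ^ m * (1 - v) ^ (s - 1) * Real.exp (r * v) := by
  set f : ℝ → ℝ := fun u => u ^ (s - 1) * (u - 1) ^ m * Real.exp (-(r * u)) with hf
  have hint : IntegrableOn f (Ioi 0) := by
    simpa only [← sub_eq_add_neg] using
      integrableOn_rpow_mul_add_pow_mul_exp_neg_mul_Ioi hs hr (-1) m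
  have hexp (u : ℝ) : Real.exp (r * (1 - u)) = Real.exp r * Real.exp (-(r * u)) := by
    rw [← Real.exp_add]
    ring_nf
  have hshift : ∫ t in Ioi (0 : ℝ), t ^ m * (1 + t) ^ (s - 1) * Real.exp (-(r * t)) =
      Real.exp r * ∫ u in Ioi (1 : ℝ), f u := by
    have h := setIntegral_Ioi_comp_add_left (fun u => Real.exp r * f u) 1 0
    rw [add_zero, integral_const_mul _ f] at h
    rw [← h]
    congr! 2 with t
    rw [hf, show -(r * t) = r * (1 - (1 + t)) by ring, hexp]
    ring
  have hreflect : (-1) ^ m * ∫ v in (0 : ℝ)..1, v ^ m * (1 - v) ^ (s - 1) * Real.exp (r * v) =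
      Real.exp r * ∫ u in (0 : ℝ)..1, f u := by
    have h := intervalIntegral.integral_comp_sub_left (a := 0) (b := 1)
      (fun v => v ^ m * (1 - v) ^ (s - 1) * Real.exp (r * v)) 1
    rw [sub_self, sub_zero] at h
    rw [← h, ← intervalIntegral.integral_const_mul, ← intervalIntegral.integral_const_mul]
    congr! 2 with u
    have hsign : (u - 1) ^ m = (-1) ^ m * (1 - u) ^ m := by rw [← mul_pow, neg_one_mul, neg_sub]
    simp only [hf, hexp, sub_sub_cancel, hsign]
    ring
  rw [hshift, hreflect, ← mul_sub, ← intervalIntegral.integral_Ioi_sub_Ioi hint zero_le_one,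
    sub_sub_cancel]

/-- Series representation of `∫_0^∞ e^{-x} x^{a-1}/(ω+x)^n dx` (up to a factor, the
Kummer function `U(a, a−n+1, ω)`) for `0 < a < 1`, integer `n ≥ 1` and `ω > 0`. -/
theorem stmt_19 (a : ℝ) (ha0 : 0 < a) (ha1 : a < 1)
    (n : ℕ) (hn : 1 ≤ n) (ω : ℝ) (hω : 0 < ω) :
    ∃ A : ℝ,
      HasSum (fun k : ℕ =>
        ((Nat.factorial (n + k - 1) : ℝ) /
            (Real.Gamma ((n : ℝ) + k + 1 - a) * (Nat.factorial k : ℝ))) * ω ^ k) A ∧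
      (∫ x in Set.Ioi (0 : ℝ), Real.exp (-x) * x ^ (a - 1) / (ω + x) ^ n) =
        ((-1 : ℝ) ^ n * Real.pi /
            (Real.sin (Real.pi * a) * (Nat.factorial (n - 1) : ℝ))) * A +
        (-1 : ℝ) ^ (n + 1) * Real.Gamma a * Real.exp ω * ω ^ (a - 1) *
          ∑ k ∈ Finset.range n,
            (-1 : ℝ) ^ k * Real.Gamma ((k : ℝ) + 1 - a) /
              ((Nat.factorial k : ℝ) * (Nat.factorial (n - 1 - k) : ℝ) * ω ^ k) := by
  obtain ⟨m, rfl⟩ := Nat.exists_eq_add_of_le' hn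
  have hs : 0 < 1 - a := sub_pos.2 ha1
  refine ⟨_, (hasSum_factorial_div_Gamma_mul_pow hs m ω).congr_fun fun k => ?_, ?_⟩
  · rw [show m + 1 + k - 1 = m + k by omega, add_sub_assoc, Nat.cast_add_one]
  · have hreflection : Real.Gamma a = Real.pi / Real.sin (Real.pi * a) / Real.Gamma (1 - a) := by
      rw [← Real.Gamma_mul_Gamma_one_sub, mul_div_cancel_right₀ _ (by positivity)]
    rw [integral_exp_neg_mul_rpow_div_add_pow ha0 m hω, show -a = 1 - a - 1 by ring,
      integral_pow_mul_one_add_rpow_mul_exp_neg_mul_Ioi hs hω,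
      integral_rpow_mul_sub_one_pow_mul_exp_neg_mul_Ioi hs hω, Nat.add_sub_cancel, neg_sub,
      mul_sub, sub_eq_neg_add]
    simp only [add_sub_assoc]
    congr 1
    · rw [hreflection]
      ring
    · rw [div_mul_eq_mul_div, div_eq_iff (by positivity)]
      ring
end
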